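/- There exists δ > 0 such that if ‖(a,b)‖₃ < δ, then for every s ≥ 5/2 the operator dS(a,b) satisfies the tame estimate ‖dS(a,b)[α,β]‖_s ≤ C(s)‖(α,β)‖_{s−1/2} + C(s)‖(a,b)‖_{s+1/2}‖(α,β)‖₂ for positive constants C(s). -/

import Mathlib

/-!
The argument is carried out on the Fourier side. For `k ≥ 1` the `k`-th Fourier coefficient of
`dS(a,b)[α,β]` is a combination of the oscillatory integrals `OI G A B g k = ∫ g G(kA) e^{-ikB}`
with `G = J₁', g = α` and `G = J₁, g = β` (`cf_nat`), and the coefficients at `k` and `-k` are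
conjugate (`cf_neg`). The positive frequencies are cut into dyadic blocks `N ≤ k < 2N`, and on
each block the functions `a, b, α, β` are split at the frequency `N/q` for a large constant `q`.
The block estimate `block_est` has three contributions.

* High frequencies of `α, β`. By Bessel's equation, `J₁` and its first two derivatives behave at
  infinity like `θ^{-1/2} (c e^{iθ} + d e^{-iθ})` up to `O(1/θ)` (`bAsym_Kr`). Inserting this
  expansion leaves `k^{-1/2}` times Fourier integrals along the circle diffeomorphisms
  `t ↦ B(t) ± A(t)`, to which a Bessel inequality applies (`bessel_diffeo`). This is the gain of half
  a derivative, `block_bound`.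
* High frequencies of `a, b`. Replacing `A, B` by their low-frequency truncations costs
  `N` times the squared `L²` norm of what is cut off, times the square of a sup norm of `α, β`
  (`block_diff`): half of the derivative which falls on the phase is regained by `block_bound`.
* Low frequencies only. Then the integrand is entire and the phase is non-stationary, since all the
  frequencies involved are much smaller than `k`. Moving the contour to `Im z = -κ log N / N` shows
  that the integral is smaller than any prescribed power of `N` (`norm_OI_shift_le`, `low_low`).

Summing over the blocks with weights `N^{2s}` turns the tails of the Fourier coefficients of `α, β`
into the norm of order `s - 1/2` and those of `a, b` into the norm of order `s + 1/2`
(`dyadic_tail`, `seq_est`), which is the tame estimate. Smallness of `(a,b)` in `H³` enters only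
through smallness of `Σ ⟨m⟩² |â(m)|` and `Σ ⟨m⟩² |b̂(m)|`, which makes `B ± A` diffeomorphisms and
controls the imaginary parts produced by the contour shift.
-/

open scoped Real BigOperators
open MeasureTheory

noncomputable section

def jb (j : ℤ) : ℝ := max 1 |(j : ℝ)|

def fc (u : ℝ → ℂ) (j : ℤ) : ℂ :=
  (1 / (2 * (π : ℂ))) * ∫ x in (0:ℝ)..(2 * π), u x * Complex.exp (-Complex.I * (j : ℂ) * (x : ℂ))

def fcR (u : ℝ → ℝ) (j : ℤ) : ℂ := fc (fun x => (u x : ℂ)) j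

def sobNorm (s : ℝ) (u : ℝ → ℂ) : ℝ :=
  Real.sqrt (∑' j : ℤ, jb j ^ (2 * s) * ‖fc u j‖ ^ 2)

def memHs (s : ℝ) (u : ℝ → ℂ) : Prop :=
  Summable (fun j : ℤ => jb j ^ (2 * s) * ‖fc u j‖ ^ 2)

def sobNormR (s : ℝ) (u : ℝ → ℝ) : ℝ := sobNorm s (fun x => (u x : ℂ))
def memHsR (s : ℝ) (u : ℝ → ℝ) : Prop := memHs s (fun x => (u x : ℂ))

def pairNorm (s : ℝ) (a b : ℝ → ℝ) : ℝ := sobNormR s a + sobNormR s b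

def seqNorm (s : ℝ) (c : ℤ → ℂ) : ℝ :=
  Real.sqrt (∑' j : ℤ, jb j ^ (2 * s) * ‖c j‖ ^ 2)

def memSeq (s : ℝ) (c : ℤ → ℂ) : Prop :=
  Summable (fun j : ℤ => jb j ^ (2 * s) * ‖c j‖ ^ 2)

def smoothPer (u : ℝ → ℝ) : Prop :=
  ContDiff ℝ (⊤ : ℕ∞) u ∧ Function.Periodic u (2 * π)

def J1 (θ : ℝ) : ℝ :=
  ((1 / (2 * (π : ℂ))) * ∫ φ in (0:ℝ)..(2 * π),
    Complex.exp (Complex.I * (θ : ℂ) * (Real.sin φ : ℂ)) * Complex.exp (-Complex.I * (φ : ℂ))).re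

/-- The linearized operator dS(a,b) acting on a pair (α,β) of periodic functions. -/
def dS (Astar : ℝ) (a b α β : ℝ → ℝ) (x : ℝ) : ℂ :=
  ∑' k : ℤ, if k = 0 then 0 else
    (∫ t in (0:ℝ)..(2 * π),
        (((deriv J1 ((k : ℝ) * (Astar + a t)) * α t : ℝ) : ℂ)
            - Complex.I * ((J1 ((k : ℝ) * (Astar + a t)) * β t : ℝ) : ℂ)) *
          Complex.exp (-Complex.I * (k : ℂ) * ((t + b t : ℝ) : ℂ))) *
      Complex.exp (Complex.I * (k : ℂ) * (x : ℂ))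

/-! ### The Bessel function `J₁` and its derivatives -/

/-- The entire function `z ↦ (1/2π) ∫ sin(φ)^p cos(z sin φ - φ + pπ/2) dφ`, the `p`-th derivative
of the Bessel function `J₁`, for complex argument. -/
def Kc (p : ℕ) (z : ℂ) : ℂ :=
  (1 / (2 * (π : ℂ))) * ∫ φ in (0:ℝ)..(2 * π),
    ((Real.sin φ : ℝ) : ℂ) ^ p *
      Complex.cos (z * ((Real.sin φ : ℝ) : ℂ) - (φ : ℂ) + ((p * (π / 2) : ℝ) : ℂ))

/-- The `p`-th derivative of the Bessel function `J₁` on the real line. -/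
def Kr (p : ℕ) (x : ℝ) : ℝ := (Kc p x).re

theorem norm_cos_le_exp (w : ℂ) : ‖Complex.cos w‖ ≤ Real.exp |w.im| := by
  have h : Complex.cos w = (Complex.exp (w * Complex.I) + Complex.exp (-w * Complex.I)) / 2 := rfl
  rw [h, norm_div, Complex.norm_ofNat, div_le_iff₀ (by norm_num)]
  refine (norm_add_le _ _).trans ?_
  rw [Complex.norm_exp, Complex.norm_exp]
  have h1 : Real.exp (w * Complex.I).re ≤ Real.exp |w.im| := by
    apply Real.exp_le_exp.2; simpa using neg_le_abs w.im
  have h2 : Real.exp (-w * Complex.I).re ≤ Real.exp |w.im| := by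
    apply Real.exp_le_exp.2; simpa using le_abs_self w.im
  linarith

theorem norm_Kc_integrand (p : ℕ) (z : ℂ) (φ : ℝ) :
    ‖((Real.sin φ : ℝ) : ℂ) ^ p *
      Complex.cos (z * ((Real.sin φ : ℝ) : ℂ) - (φ : ℂ) + ((p * (π / 2) : ℝ) : ℂ))‖
      ≤ Real.exp |z.im| := by
  have hs : |Real.sin φ| ≤ 1 := Real.abs_sin_le_one φ
  rw [norm_mul, norm_pow, Complex.norm_real, Real.norm_eq_abs]
  have h1 : |Real.sin φ| ^ p ≤ 1 := pow_le_one₀ (abs_nonneg _) hs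
  have h2 := norm_cos_le_exp (z * ((Real.sin φ : ℝ) : ℂ) - (φ : ℂ) + ((p * (π / 2) : ℝ) : ℂ))
  have h3 : |(z * ((Real.sin φ : ℝ) : ℂ) - (φ : ℂ) + ((p * (π / 2) : ℝ) : ℂ)).im| ≤ |z.im| := by
    rw [Complex.add_im, Complex.sub_im, Complex.ofReal_im, Complex.ofReal_im, Complex.im_mul_ofReal,
      sub_zero, add_zero, abs_mul]
    exact mul_le_of_le_one_right (abs_nonneg _) hs
  calc _ ≤ 1 * Real.exp |z.im| :=
        mul_le_mul h1 (h2.trans (Real.exp_le_exp.2 h3)) (norm_nonneg _) zero_le_one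
    _ = _ := one_mul _

theorem norm_Kc_le (p : ℕ) (z : ℂ) : ‖Kc p z‖ ≤ Real.exp |z.im| := by
  have h := intervalIntegral.norm_integral_le_of_norm_le_const (a := 0) (b := 2 * π)
    (fun φ _ => norm_Kc_integrand p z φ)
  have hpi := Real.pi_pos
  rw [Kc, norm_mul]
  have h2 : ‖(1 / (2 * (π : ℂ)))‖ = 1 / (2 * π) := by
    rw [norm_div, norm_mul, Complex.norm_real, Real.norm_of_nonneg hpi.le]; simp
  rw [h2]
  rw [sub_zero, abs_of_pos (show 0 < 2 * π by positivity)] at h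
  calc _ ≤ 1 / (2 * π) * (Real.exp |z.im| * (2 * π)) := by gcongr
    _ = _ := by field_simp

theorem hasDerivAt_Kc (p : ℕ) (z : ℂ) : HasDerivAt (Kc p) (Kc (p + 1) z) z := by
  unfold Kc
  apply HasDerivAt.const_mul
  refine (intervalIntegral.hasDerivAt_integral_of_dominated_loc_of_deriv_le (μ := volume)
    (bound := fun _ => Real.exp (|z.im| + 1))
    (F' := fun z φ => ((Real.sin φ : ℝ) : ℂ) ^ (p + 1) *
      Complex.cos (z * ((Real.sin φ : ℝ) : ℂ) - (φ : ℂ) + (((p + 1 : ℕ) * (π / 2) : ℝ) : ℂ)))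
    (s := Metric.ball z 1) (Metric.ball_mem_nhds z one_pos) ?_ ?_ ?_ ?_ ?_ ?_).2
  · refine Filter.Eventually.of_forall fun w => Continuous.aestronglyMeasurable ?_
    fun_prop
  · apply Continuous.intervalIntegrable; fun_prop
  · apply Continuous.aestronglyMeasurable; fun_prop
  · refine Filter.Eventually.of_forall fun φ _ w hw => ?_
    refine (norm_Kc_integrand (p + 1) w φ).trans (Real.exp_le_exp.2 ?_)
    have h1 : |(w - z).im| ≤ ‖w - z‖ := Complex.abs_im_le_norm _
    have h2 : ‖w - z‖ < 1 := by simpa [dist_eq_norm] using hw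
    have h3 := abs_sub_abs_le_abs_sub w.im z.im
    rw [Complex.sub_im] at h1
    linarith
  · apply Continuous.intervalIntegrable; fun_prop
  · refine Filter.Eventually.of_forall fun φ _ w _ => ?_
    have h1 : HasDerivAt (fun z : ℂ => z * ((Real.sin φ : ℝ) : ℂ) - (φ : ℂ) + ((p * (π / 2) : ℝ) : ℂ))
        ((Real.sin φ : ℝ) : ℂ) w := by
      simpa using (((hasDerivAt_id w).mul_const ((Real.sin φ : ℝ) : ℂ)).sub_const (φ : ℂ)).add_const
        ((p * (π / 2) : ℝ) : ℂ)
    have h2 := (h1.ccos).const_mul (((Real.sin φ : ℝ) : ℂ) ^ p)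
    refine h2.congr_deriv ?_
    have : w * ((Real.sin φ : ℝ) : ℂ) - (φ : ℂ) + (((p + 1 : ℕ) * (π / 2) : ℝ) : ℂ)
      = (w * ((Real.sin φ : ℝ) : ℂ) - (φ : ℂ) + ((p * (π / 2) : ℝ) : ℂ)) + (π : ℂ) / 2 := by
      push_cast; ring
    rw [this, Complex.cos_add_pi_div_two]
    ring

theorem hasDerivAt_Kr (p : ℕ) (x : ℝ) : HasDerivAt (Kr p) (Kr (p + 1) x) x :=
  (hasDerivAt_Kc p x).real_of_complex

theorem Kc_ofReal_eq (p : ℕ) (x : ℝ) : Kc p x = (((1 / (2 * π)) * ∫ φ in (0:ℝ)..(2 * π),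
    Real.sin φ ^ p * Real.cos (x * Real.sin φ - φ + p * (π / 2)) : ℝ) : ℂ) := by
  have h := intervalIntegral.integral_ofReal (a := 0) (b := 2 * π) (μ := volume)
    (f := fun φ : ℝ => Real.sin φ ^ p * Real.cos (x * Real.sin φ - φ + p * (π / 2)))
  rw [Complex.ofReal_mul (1 / (2 * π)), ← h, Kc]
  simp

theorem Kr_eq (p : ℕ) (x : ℝ) : Kr p x = (1 / (2 * π)) * ∫ φ in (0:ℝ)..(2 * π),
    Real.sin φ ^ p * Real.cos (x * Real.sin φ - φ + p * (π / 2)) := by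
  rw [Kr, Kc_ofReal_eq, Complex.ofReal_re]

theorem Kc_ofReal (p : ℕ) (x : ℝ) : Kc p x = (Kr p x : ℂ) := by
  rw [Kr_eq, Kc_ofReal_eq]

theorem abs_Kr_le (p : ℕ) (x : ℝ) : |Kr p x| ≤ 1 := by
  have := norm_Kc_le p x
  rw [Kc_ofReal, Complex.norm_real] at this
  simpa using this

theorem continuous_Kr (p : ℕ) : Continuous (Kr p) :=
  continuous_iff_continuousAt.2 fun x => (hasDerivAt_Kr p x).continuousAt

theorem J1_eq_Kr : J1 = Kr 0 := by
  ext θ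
  unfold J1
  rw [Kr_eq]
  have h : (1 / (2 * (π : ℂ))) = ((1 / (2 * π) : ℝ) : ℂ) := by push_cast; rfl
  rw [h, Complex.re_ofReal_mul]
  congr 1
  have hc : Continuous fun φ : ℝ => Complex.exp (Complex.I * (θ : ℂ) * (Real.sin φ : ℂ)) *
      Complex.exp (-Complex.I * (φ : ℂ)) := by fun_prop
  have := Complex.reCLM.intervalIntegral_comp_comm (hc.intervalIntegrable (μ := volume) 0 (2 * π))
  simp only [Complex.reCLM_apply] at this
  rw [← this]
  congr 1
  ext φ
  rw [← Complex.exp_add]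
  have h2 : Complex.I * (θ : ℂ) * (Real.sin φ : ℂ) + -Complex.I * (φ : ℂ)
      = ((θ * Real.sin φ - φ : ℝ) : ℂ) * Complex.I := by push_cast; ring
  rw [h2, Complex.exp_ofReal_mul_I_re]
  simp

theorem deriv_J1 : deriv J1 = Kr 1 := by
  rw [J1_eq_Kr]
  ext x
  exact (hasDerivAt_Kr 0 x).deriv

/-- Bessel's equation of order one. -/
theorem bessel_ode (x : ℝ) : x ^ 2 * Kr 2 x + x * Kr 1 x + (x ^ 2 - 1) * Kr 0 x = 0 := by
  simp only [Kr_eq]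
  -- the combined integrand is the derivative of `sin (x sin φ - φ) (x cos φ + 1)`
  have key : ∫ φ in (0:ℝ)..(2 * π), (x ^ 2 * (Real.sin φ ^ 2 * Real.cos (x * Real.sin φ - φ + (2:ℕ) * (π / 2)))
      + x * (Real.sin φ ^ 1 * Real.cos (x * Real.sin φ - φ + (1:ℕ) * (π / 2)))
      + (x ^ 2 - 1) * (Real.sin φ ^ 0 * Real.cos (x * Real.sin φ - φ + (0:ℕ) * (π / 2)))) = 0 := by
    rw [intervalIntegral.integral_eq_sub_of_hasDerivAt
      (f := fun φ => Real.sin (x * Real.sin φ - φ) * (x * Real.cos φ + 1))]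
    · simp
    · intro φ _
      have h1 : HasDerivAt (fun φ : ℝ => x * Real.sin φ - φ) (x * Real.cos φ - 1) φ :=
        ((Real.hasDerivAt_sin φ).const_mul x).sub (hasDerivAt_id φ)
      have h2 : HasDerivAt (fun φ : ℝ => x * Real.cos φ + 1) (x * -Real.sin φ) φ :=
        ((Real.hasDerivAt_cos φ).const_mul x).add_const 1
      refine (h1.sin.mul h2).congr_deriv ?_
      have e1 : x * Real.sin φ - φ + ((1:ℕ):ℝ) * (π / 2) = x * Real.sin φ - φ + π / 2 := by
        push_cast; ring
      have e2 : x * Real.sin φ - φ + ((2:ℕ):ℝ) * (π / 2) = x * Real.sin φ - φ + π := by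
        push_cast; ring
      rw [e1, e2, Real.cos_add_pi_div_two, Real.cos_add_pi]
      have := Real.sin_sq_add_cos_sq φ
      have e3 : Real.sin φ ^ 2 = 1 - Real.cos φ ^ 2 := by linarith
      rw [e3]
      simp
      ring
    · apply Continuous.intervalIntegrable; fun_prop
  rw [intervalIntegral.integral_add, intervalIntegral.integral_add,
    intervalIntegral.integral_const_mul, intervalIntegral.integral_const_mul,
    intervalIntegral.integral_const_mul] at key
  · linear_combination (1 / (2 * π)) * key
  all_goals apply Continuous.intervalIntegrable; fun_prop

/-- `G` behaves at infinity like the stationary phase expansion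
`θ^{-1/2} (c e^{iθ} + d e^{-iθ}) + O(θ^{-1})`. -/
def BAsym (G : ℝ → ℝ) : Prop :=
  ∀ θ₀ : ℝ, 0 < θ₀ → ∃ c d : ℂ, ∃ C : ℝ, 0 ≤ C ∧ ∀ θ : ℝ, θ₀ ≤ θ →
    ‖(G θ : ℂ) - ((Real.sqrt θ)⁻¹ : ℝ) *
      (c * Complex.exp (Complex.I * θ) + d * Complex.exp (-Complex.I * θ))‖ ≤ C / θ

/-- The quantity `e^{-iθ}(v' + i v)` for `v = √θ J₁(θ)`, constant when `v'' = -v`. -/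
def WW (θ : ℝ) : ℂ := Complex.exp (-Complex.I * θ) *
  (((Real.sqrt θ * Kr 1 θ + Kr 0 θ / (2 * Real.sqrt θ) : ℝ) : ℂ)
    + Complex.I * ((Real.sqrt θ * Kr 0 θ : ℝ) : ℂ))

/-- By Bessel's equation `v = √θ J₁` satisfies `v'' = -(1 - 3/(4θ²)) v`. -/
theorem hasDerivAt_WW (θ : ℝ) (h : 0 < θ) : HasDerivAt WW
    (Complex.exp (-Complex.I * θ) * ((3 / (4 * θ ^ 2) * (Real.sqrt θ * Kr 0 θ) : ℝ) : ℂ)) θ := by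
  have hs : HasDerivAt Real.sqrt (1 / (2 * Real.sqrt θ)) θ := Real.hasDerivAt_sqrt h.ne'
  have hp := Real.sqrt_pos.2 h
  have hsq : Real.sqrt θ ^ 2 = θ := Real.sq_sqrt h.le
  have hv := hs.mul (hasDerivAt_Kr 0 θ)
  have hv' := (hs.mul (hasDerivAt_Kr 1 θ)).add
    ((hasDerivAt_Kr 0 θ).div (hs.const_mul 2) (by positivity))
  have he : HasDerivAt (fun θ : ℝ => Complex.exp (-Complex.I * θ))
      (Complex.exp (-Complex.I * θ) * (-Complex.I)) θ := by
    have := ((Complex.ofRealCLM.hasDerivAt (x := θ)).const_mul (-Complex.I)).cexp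
    simpa using this
  have := he.mul (hv'.ofReal_comp.add (hv.ofReal_comp.const_mul Complex.I))
  refine this.congr_deriv ?_
  have hode := bessel_ode θ
  have hK2 : Kr 2 θ = -(Kr 1 θ) / θ - (1 - 1 / θ ^ 2) * Kr 0 θ := by
    field_simp; linarith
  simp only [Pi.add_apply, Pi.mul_apply, Pi.div_apply, Nat.reduceAdd]
  rw [hK2]
  set r := Real.sqrt θ with hr
  rw [← hsq]
  have hr0 : (r : ℂ) ≠ 0 := by exact_mod_cast hp.ne'
  generalize Kr 0 (r^2) = k0
  generalize Kr 1 (r^2) = k1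
  push_cast
  generalize Complex.exp (-Complex.I * (r:ℂ)^2) = e
  have hI := Complex.I_sq
  field_simp
  ring_nf
  simp only [hI]
  ring

/-! ### Asymptotics at infinity -/

theorem norm_exp_I (x : ℝ) : ‖Complex.exp (Complex.I * x)‖ = 1 := by
  rw [mul_comm, Complex.norm_exp_ofReal_mul_I]

theorem norm_exp_neg_I (x : ℝ) : ‖Complex.exp (-Complex.I * x)‖ = 1 := by
  have : -Complex.I * (x : ℂ) = ((-x : ℝ) : ℂ) * Complex.I := by push_cast; ring
  rw [this, Complex.norm_exp_ofReal_mul_I]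

/-- `WW` converges at infinity with rate `θ^{-1/2}`. Since `|√θ J₁| ≤ √θ`, its derivative is
`O(θ^{-3/2})`, hence integrable at infinity. -/
theorem WW_limit : ∃ L : ℂ, ∀ θ : ℝ, 0 < θ → ‖WW θ - L‖ ≤ 3 / 2 * (Real.sqrt θ)⁻¹ := by
  set D : ℝ → ℂ := fun θ =>
    Complex.exp (-Complex.I * θ) * ((3 / (4 * θ ^ 2) * (Real.sqrt θ * Kr 0 θ) : ℝ) : ℂ) with hD
  have hbound : ∀ θ : ℝ, 0 < θ → ‖D θ‖ ≤ 3 / 4 * θ ^ (-(3:ℝ) / 2) := by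
    intro θ h
    rw [hD]
    simp only
    rw [norm_mul, norm_exp_neg_I, one_mul, Complex.norm_real, Real.norm_eq_abs, abs_mul, abs_mul,
      abs_of_nonneg (Real.sqrt_nonneg θ), abs_of_nonneg (by positivity : 0 ≤ 3 / (4 * θ ^ 2))]
    have h1 : θ ^ (-(3:ℝ) / 2) = Real.sqrt θ / θ ^ 2 := by
      rw [Real.sqrt_eq_rpow, ← Real.rpow_natCast θ 2, ← Real.rpow_sub h]; norm_num
    rw [h1]
    calc _ ≤ 3 / (4 * θ ^ 2) * (Real.sqrt θ * 1) := by
          gcongr; exact abs_Kr_le 0 θ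
      _ = _ := by field_simp
  have hcont : ∀ a : ℝ, 0 < a → ContinuousOn D (Set.Ici a) := by
    intro a ha
    apply ContinuousOn.mul (by fun_prop)
    apply Complex.continuous_ofReal.comp_continuousOn
    apply ContinuousOn.mul
    · apply ContinuousOn.div (by fun_prop) (by fun_prop)
      intro x hx
      have : 0 < x := lt_of_lt_of_le ha hx
      positivity
    · exact (Real.continuous_sqrt.mul (continuous_Kr 0)).continuousOn
  have hgint : ∀ a : ℝ, 0 < a → IntegrableOn (fun θ : ℝ => 3 / 4 * θ ^ (-(3:ℝ) / 2)) (Set.Ioi a) := by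
    intro a ha
    exact (integrableOn_Ioi_rpow_of_lt (by norm_num) ha).const_mul _
  have hint : ∀ a : ℝ, 0 < a → IntegrableOn D (Set.Ioi a) := by
    intro a ha
    refine Integrable.mono' (hgint a ha)
      (((hcont a ha).mono Set.Ioi_subset_Ici_self).aestronglyMeasurable measurableSet_Ioi) ?_
    refine (ae_restrict_iff' measurableSet_Ioi).2 (Filter.Eventually.of_forall fun x hx => ?_)
    exact hbound x (ha.trans hx)
  have hlim := tendsto_limUnder_of_hasDerivAt_of_integrableOn_Ioi (f := WW) (f' := D) (a := 1)
    (fun x hx => hasDerivAt_WW x (zero_lt_one.trans hx)) (hint 1 zero_lt_one)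
  refine ⟨Filter.atTop.limUnder WW, fun θ hθ => ?_⟩
  have h := integral_Ioi_of_hasDerivAt_of_tendsto' (f := WW) (f' := D) (a := θ)
    (fun x hx => hasDerivAt_WW x (lt_of_lt_of_le hθ hx)) (hint θ hθ) hlim
  rw [norm_sub_rev, ← h]
  refine (norm_integral_le_of_norm_le (hgint θ hθ) ?_).trans (le_of_eq ?_)
  · refine (ae_restrict_iff' measurableSet_Ioi).2 (Filter.Eventually.of_forall fun x hx => ?_)
    exact hbound x (hθ.trans hx)
  · rw [integral_const_mul, integral_Ioi_rpow_of_lt (by norm_num) hθ]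
    have : (Real.sqrt θ)⁻¹ = θ ^ (-(3:ℝ)/2 + 1) := by
      rw [Real.sqrt_eq_rpow, ← Real.rpow_neg hθ.le]; norm_num
    rw [this]; ring

/-- Asymptotics of `J₁` and `J₁'`: with `v = √θ J₁`, the quantity `e^{-iθ}(v' + i v)` has a limit
`L`, and `J₁`, `J₁'` are read off from imaginary and real part. -/
theorem Kr_asymp : ∃ L : ℂ, ∀ θ : ℝ, 0 < θ →
    |Kr 0 θ - (Real.sqrt θ)⁻¹ * (Complex.exp (Complex.I * θ) * L).im| ≤ 3 / 2 / θ ∧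
    |Kr 1 θ - (Real.sqrt θ)⁻¹ * (Complex.exp (Complex.I * θ) * L).re| ≤ 2 / θ := by
  obtain ⟨L, hL⟩ := WW_limit
  refine ⟨L, fun θ hθ => ?_⟩
  have hp := Real.sqrt_pos.2 hθ
  have hsq : Real.sqrt θ * Real.sqrt θ = θ := Real.mul_self_sqrt hθ.le
  set r := Real.sqrt θ with hr
  set Z := Complex.exp (Complex.I * θ) * (WW θ - L) with hZ
  have hZn : ‖Z‖ ≤ 3 / 2 * r⁻¹ := by
    rw [hZ, norm_mul, norm_exp_I, one_mul]; exact hL θ hθ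
  have hZ2 : Z = (((r * Kr 1 θ + Kr 0 θ / (2 * r) : ℝ) : ℂ)
    + Complex.I * ((r * Kr 0 θ : ℝ) : ℂ)) - Complex.exp (Complex.I * θ) * L := by
    rw [hZ, WW, mul_sub, ← mul_assoc, ← Complex.exp_add]
    simp [hr]
  have him : Z.im = r * Kr 0 θ - (Complex.exp (Complex.I * θ) * L).im := by
    rw [hZ2]; simp only [Complex.sub_im, Complex.add_im, Complex.ofReal_im, Complex.I_mul_im,
      Complex.ofReal_re, zero_add]
  have hre : Z.re = r * Kr 1 θ + Kr 0 θ / (2 * r) - (Complex.exp (Complex.I * θ) * L).re := by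
    rw [hZ2]; simp only [Complex.sub_re, Complex.add_re, Complex.ofReal_re, Complex.I_mul_re,
      Complex.ofReal_im, neg_zero, add_zero]
  have him' := (Complex.abs_im_le_norm Z).trans hZn
  have hre' := (Complex.abs_re_le_norm Z).trans hZn
  have e1 : r⁻¹ * (3 / 2 * r⁻¹) = 3 / 2 / θ := by rw [← hsq]; field_simp
  have hpi : 0 ≤ r⁻¹ := by positivity
  constructor
  · have : Kr 0 θ - r⁻¹ * (Complex.exp (Complex.I * θ) * L).im = r⁻¹ * Z.im := by
      rw [him]; field_simp
    rw [this, abs_mul, abs_of_nonneg hpi, ← e1]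
    gcongr
  · have : Kr 1 θ - r⁻¹ * (Complex.exp (Complex.I * θ) * L).re
        = r⁻¹ * Z.re - Kr 0 θ / (2 * θ) := by
      rw [hre, ← hsq]; field_simp; ring
    rw [this]
    have h2 : |Kr 0 θ / (2 * θ)| ≤ 1 / 2 / θ := by
      rw [abs_div, abs_of_pos (by positivity : 0 < 2 * θ), div_div]
      gcongr; exact abs_Kr_le 0 θ
    calc _ ≤ |r⁻¹ * Z.re| + |Kr 0 θ / (2 * θ)| := abs_sub _ _
      _ ≤ 3 / 2 / θ + 1 / 2 / θ := by
        refine add_le_add ?_ h2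
        rw [abs_mul, abs_of_nonneg hpi, ← e1]; gcongr
      _ = 2 / θ := by ring

theorem conj_exp_I (θ : ℝ) (L : ℂ) : (starRingEnd ℂ) (Complex.exp (Complex.I * θ) * L)
    = Complex.exp (-Complex.I * θ) * (starRingEnd ℂ) L := by
  rw [map_mul, ← Complex.exp_conj]; simp

theorem bAsym_aux {G : ℝ → ℝ} (θ : ℝ) (K : ℝ) (c d : ℂ) (m : ℝ)
    (hm : (m : ℂ) = c * Complex.exp (Complex.I * θ) + d * Complex.exp (-Complex.I * θ))
    (h : |G θ - (Real.sqrt θ)⁻¹ * m| ≤ K) :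
    ‖(G θ : ℂ) - ((Real.sqrt θ)⁻¹ : ℝ) *
      (c * Complex.exp (Complex.I * θ) + d * Complex.exp (-Complex.I * θ))‖ ≤ K := by
  rw [← hm, ← Complex.ofReal_mul, ← Complex.ofReal_sub, Complex.norm_real]
  exact h

/-- `J₁` and `J₁'` have the required asymptotics by `Kr_asymp`; for `J₁''` they follow from Bessel's
equation. -/
theorem bAsym_Kr : BAsym (Kr 0) ∧ BAsym (Kr 1) ∧ BAsym (Kr 2) := by
  obtain ⟨L, hL⟩ := Kr_asymp
  have him : ∀ θ : ℝ, (((Complex.exp (Complex.I * θ) * L).im : ℝ) : ℂ)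
      = (L / (2 * Complex.I)) * Complex.exp (Complex.I * θ)
        + (-(starRingEnd ℂ L) / (2 * Complex.I)) * Complex.exp (-Complex.I * θ) := by
    intro θ
    rw [Complex.im_eq_sub_conj, conj_exp_I]; ring
  have hre : ∀ θ : ℝ, (((Complex.exp (Complex.I * θ) * L).re : ℝ) : ℂ)
      = (L / 2) * Complex.exp (Complex.I * θ)
        + ((starRingEnd ℂ L) / 2) * Complex.exp (-Complex.I * θ) := by
    intro θ
    rw [Complex.re_eq_add_conj, conj_exp_I]; ring
  refine ⟨fun θ₀ h₀ => ⟨_, _, 3 / 2, by norm_num, fun θ hθ =>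
      bAsym_aux θ _ _ _ _ (him θ) (hL θ (h₀.trans_le hθ)).1⟩,
    fun θ₀ h₀ => ⟨_, _, 2, by norm_num, fun θ hθ =>
      bAsym_aux θ _ _ _ _ (hre θ) (hL θ (h₀.trans_le hθ)).2⟩,
    fun θ₀ h₀ => ⟨-(L / (2 * Complex.I)), (starRingEnd ℂ L) / (2 * Complex.I),
      5 / 2 + 1 / θ₀, by positivity, fun θ hθ => ?_⟩⟩
  have hp := h₀.trans_le hθ
  refine bAsym_aux θ _ _ _ (-(Complex.exp (Complex.I * θ) * L).im) ?_ ?_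
  · rw [Complex.ofReal_neg, him]; ring
  have hode := bessel_ode θ
  have hK2 : Kr 2 θ = -(Kr 0 θ) - Kr 1 θ / θ + Kr 0 θ / θ ^ 2 := by
    field_simp; linarith
  have h0 := (hL θ hp).1
  have e : Kr 2 θ - (Real.sqrt θ)⁻¹ * -(Complex.exp (Complex.I * θ) * L).im
      = -(Kr 0 θ - (Real.sqrt θ)⁻¹ * (Complex.exp (Complex.I * θ) * L).im)
        + (-(Kr 1 θ / θ)) + Kr 0 θ / θ ^ 2 := by rw [hK2]; ring
  rw [e]
  refine (abs_add_three _ _ _).trans ?_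
  rw [abs_neg, abs_neg, abs_div, abs_div, abs_of_pos hp, abs_of_pos (by positivity : 0 < θ ^ 2)]
  calc _ ≤ 3 / 2 / θ + 1 / θ + 1 / θ ^ 2 := by
        gcongr
        · exact abs_Kr_le 1 θ
        · exact abs_Kr_le 0 θ
    _ = 3 / 2 / θ + 1 / θ + (1 / θ) / θ := by rw [div_div 1 θ θ, sq]
    _ ≤ 3 / 2 / θ + 1 / θ + (1 / θ₀) / θ := by gcongr
    _ = _ := by ring

/-! ### Bessel inequality along a diffeomorphism -/

theorem integral_exp_int (m : ℤ) (c : ℝ) :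
    ∫ y in c..(c + 2 * π), Complex.exp (Complex.I * m * y) = if m = 0 then 2 * (π : ℂ) else 0 := by
  split_ifs with h
  · subst h; simp
  · have hm : Complex.I * (m : ℂ) ≠ 0 := mul_ne_zero Complex.I_ne_zero (by exact_mod_cast h)
    rw [integral_exp_mul_complex hm]
    have : Complex.I * (m : ℂ) * ((c + 2 * π : ℝ) : ℂ)
        = Complex.I * m * c + m * (2 * π * Complex.I) := by push_cast; ring
    rw [this, Complex.exp_add, Complex.exp_int_mul_two_pi_mul_I]
    simp

/-- Parseval for a trigonometric polynomial, over a period starting at any point. -/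
theorem integral_normSq_trig (F : Finset ℕ) (d : ℕ → ℂ) (c : ℝ) :
    ∫ y in c..(c + 2 * π), ‖∑ k ∈ F, d k * Complex.exp (Complex.I * k * y)‖ ^ 2
      = 2 * π * ∑ k ∈ F, ‖d k‖ ^ 2 := by
  have h : ∀ y : ℝ, ((‖∑ k ∈ F, d k * Complex.exp (Complex.I * k * y)‖ ^ 2 : ℝ) : ℂ)
      = ∑ k ∈ F, ∑ l ∈ F, (d k * (starRingEnd ℂ) (d l)) *
        Complex.exp (Complex.I * ((k : ℤ) - (l : ℤ) : ℤ) * y) := by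
    intro y
    push_cast
    rw [← Complex.mul_conj', map_sum, Finset.sum_mul_sum]
    refine Finset.sum_congr rfl fun k _ => Finset.sum_congr rfl fun l _ => ?_
    rw [map_mul, ← Complex.exp_conj]
    have : Complex.exp (Complex.I * ((k : ℂ) - l) * y)
      = Complex.exp (Complex.I * k * y) * Complex.exp ((starRingEnd ℂ) (Complex.I * l * y)) := by
      rw [← Complex.exp_add]; simp; ring_nf
    rw [this]; ring
  have h2 : ((∫ y in c..(c + 2 * π), ‖∑ k ∈ F, d k * Complex.exp (Complex.I * k * y)‖ ^ 2 : ℝ) : ℂ)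
      = ((2 * π * ∑ k ∈ F, ‖d k‖ ^ 2 : ℝ) : ℂ) := by
    rw [← intervalIntegral.integral_ofReal]
    simp_rw [h]
    rw [intervalIntegral.integral_finsetSum]
    · have hR : ((2 * π * ∑ k ∈ F, ‖d k‖ ^ 2 : ℝ) : ℂ)
          = ∑ k ∈ F, d k * (starRingEnd ℂ) (d k) * (2 * π) := by
        push_cast
        rw [Finset.mul_sum]
        refine Finset.sum_congr rfl fun k _ => ?_
        rw [Complex.mul_conj']; ring
      rw [hR]
      refine Finset.sum_congr rfl fun k hk => ?_
      rw [intervalIntegral.integral_finsetSum]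
      · simp_rw [intervalIntegral.integral_const_mul, integral_exp_int, sub_eq_zero, Nat.cast_inj]
        simp only [mul_ite, mul_zero, Finset.sum_ite_eq, hk, if_true]
      · intro l _; apply Continuous.intervalIntegrable; fun_prop
    · intro l _; apply Continuous.intervalIntegrable; fun_prop
  exact_mod_cast h2

/-- A Bessel inequality along a circle diffeomorphism `ψ`, proved by duality: only the
substitution rule for `ψ` and orthogonality of exponentials are used. -/
theorem bessel_diffeo {ψ ψ' : ℝ → ℝ} (hψ : ∀ t, HasDerivAt ψ (ψ' t) t) (hc : Continuous ψ')
    (hlow : ∀ t, 1 / 2 ≤ ψ' t) (hper : ψ (2 * π) = ψ 0 + 2 * π) {f : ℝ → ℂ} (hf : Continuous f)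
    (F : Finset ℕ) :
    ∑ k ∈ F, ‖∫ t in (0:ℝ)..(2 * π), f t * Complex.exp (-Complex.I * k * ψ t)‖ ^ 2
      ≤ 4 * π * ∫ t in (0:ℝ)..(2 * π), ‖f t‖ ^ 2 := by
  have hpi := Real.pi_pos
  have hψc : Continuous ψ := continuous_iff_continuousAt.2 fun t => (hψ t).continuousAt
  set d : ℕ → ℂ := fun k => ∫ t in (0:ℝ)..(2 * π), f t * Complex.exp (-Complex.I * k * ψ t) with hd
  set P : ℝ → ℂ := fun y => ∑ k ∈ F, d k * Complex.exp (Complex.I * k * y) with hP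
  have hPc : Continuous P := by rw [hP]; fun_prop
  set S := ∑ k ∈ F, ‖d k‖ ^ 2 with hS
  have hS1 : (S : ℂ) = ∫ t in (0:ℝ)..(2 * π), f t * (starRingEnd ℂ) (P (ψ t)) := by
    have : ∀ t : ℝ, f t * (starRingEnd ℂ) (P (ψ t))
        = ∑ k ∈ F, (starRingEnd ℂ) (d k) * (f t * Complex.exp (-Complex.I * k * ψ t)) := by
      intro t
      simp only [hP, map_sum, map_mul, ← Complex.exp_conj, Finset.mul_sum]
      refine Finset.sum_congr rfl fun k _ => ?_
      simp; ring
    simp_rw [this]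
    rw [intervalIntegral.integral_finsetSum]
    · simp_rw [intervalIntegral.integral_const_mul]
      rw [hS]; push_cast
      refine Finset.sum_congr rfl fun k _ => ?_
      rw [← Complex.mul_conj', mul_comm]
    · intro l _; apply Continuous.intervalIntegrable; fun_prop
  have hS2 : ∫ t in (0:ℝ)..(2 * π), ‖P (ψ t)‖ ^ 2 ≤ 4 * π * S := by
    have h1 : ∫ t in (0:ℝ)..(2 * π), ‖P (ψ t)‖ ^ 2 * ψ' t = 2 * π * S := by
      have := intervalIntegral.integral_comp_mul_deriv (a := 0) (b := 2 * π)
        (f := ψ) (f' := ψ') (g := fun y => ‖P y‖ ^ 2) (fun t _ => hψ t) hc.continuousOn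
        (by fun_prop)
      simp only [Function.comp] at this
      rw [this, hper, integral_normSq_trig]
    have h2 : ∫ t in (0:ℝ)..(2 * π), ‖P (ψ t)‖ ^ 2
        ≤ ∫ t in (0:ℝ)..(2 * π), 2 * (‖P (ψ t)‖ ^ 2 * ψ' t) := by
      apply intervalIntegral.integral_mono_on (by positivity)
      · apply Continuous.intervalIntegrable; fun_prop
      · apply Continuous.intervalIntegrable; fun_prop
      · intro t _
        nlinarith [hlow t, sq_nonneg ‖P (ψ t)‖]
    rw [intervalIntegral.integral_const_mul, h1] at h2
    linarith
  have hS0 : 0 ≤ S := Finset.sum_nonneg fun _ _ => by positivity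
  have hS3 : S ≤ ∫ t in (0:ℝ)..(2 * π), (2 * π * ‖f t‖ ^ 2 + 1 / (8 * π) * ‖P (ψ t)‖ ^ 2) := by
    have : S = ‖∫ t in (0:ℝ)..(2 * π), f t * (starRingEnd ℂ) (P (ψ t))‖ := by
      rw [← hS1, Complex.norm_real, Real.norm_of_nonneg hS0]
    rw [this]
    apply intervalIntegral.norm_integral_le_of_norm_le (by positivity)
    · refine Filter.Eventually.of_forall fun t _ => ?_
      rw [norm_mul, RCLike.norm_conj]
      have e : 2 * π * ‖f t‖ ^ 2 + 1 / (8 * π) * ‖P (ψ t)‖ ^ 2 - ‖f t‖ * ‖P (ψ t)‖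
        = (8 * π)⁻¹ * (4 * π * ‖f t‖ - ‖P (ψ t)‖) ^ 2 := by field_simp; ring
      have : 0 ≤ (8 * π)⁻¹ * (4 * π * ‖f t‖ - ‖P (ψ t)‖) ^ 2 := by positivity
      linarith
    · apply Continuous.intervalIntegrable; fun_prop
  rw [intervalIntegral.integral_add, intervalIntegral.integral_const_mul,
    intervalIntegral.integral_const_mul] at hS3
  · have h4 : 1 / (8 * π) * ∫ t in (0:ℝ)..(2 * π), ‖P (ψ t)‖ ^ 2 ≤ 1 / (8 * π) * (4 * π * S) := by
      gcongr
    have h5 : 1 / (8 * π) * (4 * π * S) = S / 2 := by field_simp; ring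
    linarith
  · apply Continuous.intervalIntegrable; fun_prop
  · apply Continuous.intervalIntegrable; fun_prop

/-- Cauchy-Schwarz on a period. -/
theorem sq_integral_norm_le {f : ℝ → ℂ} (hf : Continuous f) :
    (∫ t in (0:ℝ)..(2 * π), ‖f t‖) ^ 2 ≤ 2 * π * ∫ t in (0:ℝ)..(2 * π), ‖f t‖ ^ 2 := by
  have hpi := Real.pi_pos
  set m := ∫ t in (0:ℝ)..(2 * π), ‖f t‖ with hm
  have h : 0 ≤ ∫ t in (0:ℝ)..(2 * π), (2 * π * ‖f t‖ - m) ^ 2 :=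
    intervalIntegral.integral_nonneg (by positivity) fun t _ => sq_nonneg _
  have e : ∀ t, (2 * π * ‖f t‖ - m) ^ 2 = (2 * π) ^ 2 * ‖f t‖ ^ 2 - (4 * π * m) * ‖f t‖ + m ^ 2 := by
    intro t; ring
  simp_rw [e] at h
  rw [intervalIntegral.integral_add, intervalIntegral.integral_sub,
    intervalIntegral.integral_const_mul, intervalIntegral.integral_const_mul, ← hm,
    intervalIntegral.integral_const] at h
  · simp only [sub_zero, smul_eq_mul] at h
    have : 0 ≤ 2 * π * (2 * π * ∫ t in (0:ℝ)..(2 * π), ‖f t‖ ^ 2) - 2 * π * m ^ 2 := by nlinarith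
    have h2 : 0 ≤ 2 * π * (2 * π * (∫ t in (0:ℝ)..(2 * π), ‖f t‖ ^ 2) - m ^ 2) := by linarith
    have h3 := nonneg_of_mul_nonneg_right h2 (by positivity : 0 < 2 * π)
    linarith
  all_goals apply Continuous.intervalIntegrable; fun_prop

/-! ### Half-derivative gain on dyadic blocks -/

/-- An amplitude `A` and a circle diffeomorphism `B` which are `C¹`-close to a constant and to the
identity; `κ` is a lower bound for `A`. This class of pairs is convex. -/
structure AdmPhase (κ : ℝ) (A B : ℝ → ℝ) : Prop where
  cA : ContDiff ℝ 1 A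
  cB : ContDiff ℝ 1 B
  low : ∀ t, κ ≤ A t
  dA : ∀ t, |deriv A t| ≤ 1 / 4
  dB : ∀ t, |deriv B t - 1| ≤ 1 / 4
  pA : A (2 * π) = A 0
  pB : B (2 * π) = B 0 + 2 * π

/-- The oscillatory integral `∫ g G(kA) e^{-ikB}` over a period. -/
def OI (G A B : ℝ → ℝ) (g : ℝ → ℂ) (k : ℕ) : ℂ :=
  ∫ t in (0:ℝ)..(2 * π), g t * ((G (k * A t) : ℝ) : ℂ) * Complex.exp (-Complex.I * k * B t)

/-- `bessel_diffeo` for `B + σA`, whose derivative is at least `1/2`. -/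
theorem AdmPhase.bessel {κ : ℝ} {A B : ℝ → ℝ} (h : AdmPhase κ A B) (σ : ℝ) (hσ : |σ| ≤ 1)
    {f : ℝ → ℂ} (hf : Continuous f) (F : Finset ℕ) :
    ∑ k ∈ F, ‖∫ t in (0:ℝ)..(2 * π), f t *
        Complex.exp (-Complex.I * k * ((B t + σ * A t : ℝ) : ℂ))‖ ^ 2
      ≤ 4 * π * ∫ t in (0:ℝ)..(2 * π), ‖f t‖ ^ 2 := by
  refine bessel_diffeo (ψ := fun t => B t + σ * A t) (ψ' := fun t => deriv B t + σ * deriv A t)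
    (fun t => ?_) ?_ (fun t => ?_) ?_ hf F
  · exact ((h.cB.differentiable one_ne_zero t).hasDerivAt).add
      (((h.cA.differentiable one_ne_zero t).hasDerivAt).const_mul σ)
  · exact (h.cB.continuous_deriv le_rfl).add (continuous_const.mul (h.cA.continuous_deriv le_rfl))
  · have h1 := (abs_le.1 (h.dB t)).1
    have h2 : |σ * deriv A t| ≤ 1 / 4 := by
      rw [abs_mul]
      calc _ ≤ 1 * (1 / 4) := mul_le_mul hσ (h.dA t) (abs_nonneg _) zero_le_one
        _ = _ := one_mul _
    have h3 := (abs_le.1 h2).1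
    linarith
  · simp only [h.pA, h.pB]; ring

/-- Replacing `G` by its leading asymptotics: as `√(kA) = √k √A`, the main term is `k^{-1/2}` times
Fourier integrals along `B - A` and `B + A`. -/
theorem norm_sub_main_le {G : ℝ → ℝ} (hGc : Continuous G) {κ : ℝ} (hκ : 0 < κ) {c d : ℂ} {C : ℝ}
    (hC : 0 ≤ C)
    (hG : ∀ θ : ℝ, κ ≤ θ → ‖(G θ : ℂ) - ((Real.sqrt θ)⁻¹ : ℝ) *
      (c * Complex.exp (Complex.I * θ) + d * Complex.exp (-Complex.I * θ))‖ ≤ C / θ)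
    {A B : ℝ → ℝ} (h : AdmPhase κ A B) {g : ℝ → ℂ} (hg : Continuous g) (k : ℕ) (hk : 1 ≤ k) :
    ‖OI G A B g k - ((Real.sqrt k)⁻¹ : ℝ) *
      (c * (∫ t in (0:ℝ)..(2 * π), g t * ((Real.sqrt (A t))⁻¹ : ℝ) *
        Complex.exp (-Complex.I * k * ((B t + (-1) * A t : ℝ) : ℂ))) +
       d * (∫ t in (0:ℝ)..(2 * π), g t * ((Real.sqrt (A t))⁻¹ : ℝ) *
        Complex.exp (-Complex.I * k * ((B t + 1 * A t : ℝ) : ℂ))))‖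
      ≤ C / (k * κ) * ∫ t in (0:ℝ)..(2 * π), ‖g t‖ := by
  have hpi := Real.pi_pos
  have hAc := h.cA.continuous
  have hBc := h.cB.continuous
  have hA0 : ∀ t, 0 < A t := fun t => hκ.trans_le (h.low t)
  have hs0 : ∀ t, Real.sqrt (A t) ≠ 0 := fun t => (Real.sqrt_pos.2 (hA0 t)).ne'
  have hk0 : (0:ℝ) < k := by exact_mod_cast hk
  have hk1 : (1:ℝ) ≤ k := by exact_mod_cast hk
  have hsc : Continuous fun t => (Real.sqrt (A t))⁻¹ := (Real.continuous_sqrt.comp hAc).inv₀ hs0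
  rw [← intervalIntegral.integral_const_mul, ← intervalIntegral.integral_const_mul,
    ← intervalIntegral.integral_add, ← intervalIntegral.integral_const_mul, OI,
    ← intervalIntegral.integral_sub, ← intervalIntegral.integral_const_mul]
  · apply intervalIntegral.norm_integral_le_of_norm_le (by positivity)
    · refine Filter.Eventually.of_forall fun t _ => ?_
      have hkA : κ ≤ k * A t := by nlinarith [h.low t, hA0 t]
      have h1 := hG _ hkA
      have e : g t * ((G (k * A t) : ℝ) : ℂ) * Complex.exp (-Complex.I * k * B t)
          - ((Real.sqrt k)⁻¹ : ℝ) * (c * (g t * ((Real.sqrt (A t))⁻¹ : ℝ) *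
        Complex.exp (-Complex.I * k * ((B t + (-1) * A t : ℝ) : ℂ))) +
       d * (g t * ((Real.sqrt (A t))⁻¹ : ℝ) *
        Complex.exp (-Complex.I * k * ((B t + 1 * A t : ℝ) : ℂ))))
        = g t * Complex.exp (-Complex.I * ((k * B t : ℝ) : ℂ)) * ((G (k * A t) : ℂ) -
          ((Real.sqrt (k * A t))⁻¹ : ℝ) * (c * Complex.exp (Complex.I * ((k * A t : ℝ) : ℂ))
            + d * Complex.exp (-Complex.I * ((k * A t : ℝ) : ℂ)))) := by
        rw [Real.sqrt_mul hk0.le, mul_inv]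
        have e1 : Complex.exp (-Complex.I * k * ((B t + (-1) * A t : ℝ) : ℂ))
          = Complex.exp (-Complex.I * ((k * B t : ℝ) : ℂ)) * Complex.exp (Complex.I * ((k * A t : ℝ) : ℂ)) := by
          rw [← Complex.exp_add]; push_cast; ring_nf
        have e2 : Complex.exp (-Complex.I * k * ((B t + 1 * A t : ℝ) : ℂ))
          = Complex.exp (-Complex.I * ((k * B t : ℝ) : ℂ)) * Complex.exp (-Complex.I * ((k * A t : ℝ) : ℂ)) := by
          rw [← Complex.exp_add]; push_cast; ring_nf
        have e3 : Complex.exp (-Complex.I * k * B t)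
          = Complex.exp (-Complex.I * ((k * B t : ℝ) : ℂ)) := by push_cast; ring_nf
        rw [e1, e2, e3]
        push_cast
        ring
      rw [e, norm_mul, norm_mul, norm_exp_neg_I, mul_one, mul_comm]
      gcongr
      refine h1.trans ?_
      gcongr
      exact h.low t
    · apply Continuous.intervalIntegrable; fun_prop
  all_goals apply Continuous.intervalIntegrable; fun_prop

theorem norm_add_three_sq_le (x y z : ℝ) {w : ℝ} (hw0 : 0 ≤ w)
    (hw : w ≤ x + y + z) : w ^ 2 ≤ 3 * (x ^ 2 + y ^ 2 + z ^ 2) := by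
  have : w ^ 2 ≤ (x + y + z) ^ 2 := pow_le_pow_left₀ hw0 hw 2
  nlinarith [sq_nonneg (x - y), sq_nonneg (y - z), sq_nonneg (x - z)]

/-- The half-derivative gain: on a dyadic block of frequencies the oscillatory integrals with a
Bessel-type amplitude are square summable with norm `O(N^{-1/2})`. -/
theorem block_bound {G : ℝ → ℝ} (hGc : Continuous G) (hG : BAsym G) {κ : ℝ} (hκ : 0 < κ) :
    ∃ C : ℝ, 0 ≤ C ∧ ∀ A B : ℝ → ℝ, AdmPhase κ A B → ∀ g : ℝ → ℂ, Continuous g →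
      ∀ N : ℕ, 1 ≤ N → ∑ k ∈ Finset.Ico N (2 * N), ‖OI G A B g k‖ ^ 2
        ≤ C / N * ∫ t in (0:ℝ)..(2 * π), ‖g t‖ ^ 2 := by
  have hpi := Real.pi_pos
  obtain ⟨c, d, C, hC, hGa⟩ := hG κ hκ
  refine ⟨3 * (‖c‖ ^ 2 * (4 * π * κ⁻¹) + ‖d‖ ^ 2 * (4 * π * κ⁻¹) + (C / κ) ^ 2 * (2 * π)), by positivity,
    fun A B h g hg N hN => ?_⟩
  have hA0 : ∀ t, 0 < A t := fun t => hκ.trans_le (h.low t)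
  have hs0 : ∀ t, Real.sqrt (A t) ≠ 0 := fun t => (Real.sqrt_pos.2 (hA0 t)).ne'
  have hsc : Continuous fun t => (Real.sqrt (A t))⁻¹ :=
    (Real.continuous_sqrt.comp h.cA.continuous).inv₀ hs0
  set f : ℝ → ℂ := fun t => g t * ((Real.sqrt (A t))⁻¹ : ℝ) with hf
  have hfc : Continuous f := by rw [hf]; fun_prop
  set Q := ∫ t in (0:ℝ)..(2 * π), ‖g t‖ ^ 2 with hQ
  have hfQ : ∫ t in (0:ℝ)..(2 * π), ‖f t‖ ^ 2 ≤ κ⁻¹ * Q := by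
    rw [hQ, ← intervalIntegral.integral_const_mul]
    apply intervalIntegral.integral_mono_on (by positivity)
    · apply Continuous.intervalIntegrable; fun_prop
    · apply Continuous.intervalIntegrable; fun_prop
    · intro t _
      rw [hf]; simp only
      rw [norm_mul, mul_pow, Complex.norm_real, Real.norm_eq_abs, sq_abs, inv_pow,
        Real.sq_sqrt (hA0 t).le, mul_comm]
      gcongr
      exact h.low t
  set X : ℕ → ℂ := fun k => ∫ t in (0:ℝ)..(2 * π), f t *
    Complex.exp (-Complex.I * k * ((B t + (-1) * A t : ℝ) : ℂ)) with hX
  set Y : ℕ → ℂ := fun k => ∫ t in (0:ℝ)..(2 * π), f t *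
    Complex.exp (-Complex.I * k * ((B t + 1 * A t : ℝ) : ℂ)) with hY
  have hXs : ∑ k ∈ Finset.Ico N (2 * N), ‖X k‖ ^ 2 ≤ 4 * π * κ⁻¹ * Q := by
    refine (h.bessel (-1) (by norm_num) hfc _).trans ?_
    calc _ ≤ 4 * π * (κ⁻¹ * Q) := by gcongr
      _ = _ := by ring
  have hYs : ∑ k ∈ Finset.Ico N (2 * N), ‖Y k‖ ^ 2 ≤ 4 * π * κ⁻¹ * Q := by
    refine (h.bessel 1 (by norm_num) hfc _).trans ?_
    calc _ ≤ 4 * π * (κ⁻¹ * Q) := by gcongr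
      _ = _ := by ring
  have hN0 : (0:ℝ) < N := by exact_mod_cast hN
  set m := ∫ t in (0:ℝ)..(2 * π), ‖g t‖ with hm
  have hm0 : 0 ≤ m := intervalIntegral.integral_nonneg (by positivity) fun _ _ => norm_nonneg _
  have hmQ : m ^ 2 ≤ 2 * π * Q := sq_integral_norm_le hg
  have hpt : ∀ k ∈ Finset.Ico N (2 * N), ‖OI G A B g k‖ ^ 2 ≤
      3 * ((N:ℝ)⁻¹ * ‖c‖ ^ 2 * ‖X k‖ ^ 2 + (N:ℝ)⁻¹ * ‖d‖ ^ 2 * ‖Y k‖ ^ 2 + ((C / (N * κ)) ^ 2 * m ^ 2)) := by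
    intro k hk
    have hNk : N ≤ k := (Finset.mem_Ico.1 hk).1
    have hNk' : (N:ℝ) ≤ k := by exact_mod_cast hNk
    have hk0 : (0:ℝ) < k := hN0.trans_le hNk'
    have h1 := norm_sub_main_le hGc hκ hC hGa h hg k (hN.trans hNk)
    have h2 : ‖OI G A B g k‖ ≤ (Real.sqrt k)⁻¹ * (‖c‖ * ‖X k‖) + (Real.sqrt k)⁻¹ * (‖d‖ * ‖Y k‖)
        + C / (k * κ) * m := by
      have e : OI G A B g k = (OI G A B g k - ((Real.sqrt k)⁻¹ : ℝ) * (c * X k + d * Y k))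
        + ((Real.sqrt k)⁻¹ : ℝ) * (c * X k + d * Y k) := by ring
      rw [e]
      refine (norm_add_le _ _).trans ?_
      have h3 : ‖(((Real.sqrt k)⁻¹ : ℝ) : ℂ) * (c * X k + d * Y k)‖
        ≤ (Real.sqrt k)⁻¹ * (‖c‖ * ‖X k‖ + ‖d‖ * ‖Y k‖) := by
        rw [norm_mul, Complex.norm_real, Real.norm_of_nonneg (by positivity)]
        gcongr
        refine (norm_add_le _ _).trans ?_
        rw [norm_mul, norm_mul]
      have h1' : ‖OI G A B g k - ((Real.sqrt k)⁻¹ : ℝ) * (c * X k + d * Y k)‖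
        ≤ C / (k * κ) * m := h1
      exact (add_le_add h1' h3).trans (le_of_eq (by ring))
    refine (norm_add_three_sq_le _ _ _ (norm_nonneg _) h2).trans ?_
    have hsk : ((Real.sqrt k)⁻¹) ^ 2 ≤ (N:ℝ)⁻¹ := by
      rw [inv_pow, Real.sq_sqrt hk0.le]; gcongr
    simp only [mul_pow]
    rw [← mul_assoc, ← mul_assoc]
    gcongr
  refine (Finset.sum_le_sum hpt).trans ?_
  rw [← Finset.mul_sum, Finset.sum_add_distrib, Finset.sum_add_distrib, ← Finset.mul_sum,
    ← Finset.mul_sum, Finset.sum_const, Nat.card_Ico, nsmul_eq_mul]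
  have e : ((2 * N - N : ℕ) : ℝ) = N := by
    congr 1; omega
  rw [e]
  calc _ ≤ 3 * ((N:ℝ)⁻¹ * ‖c‖ ^ 2 * (4 * π * κ⁻¹ * Q) + (N:ℝ)⁻¹ * ‖d‖ ^ 2 * (4 * π * κ⁻¹ * Q)
        + N * ((C / (N * κ)) ^ 2 * (2 * π * Q))) := by gcongr
    _ = _ := by field_simp

/-! ### Changing the phase -/

/-- The segment between two phases. -/
def seg (A₀ A₁ : ℝ → ℝ) (θ : ℝ) (t : ℝ) : ℝ := A₀ t + θ * (A₁ t - A₀ t)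

theorem AdmPhase.seg {κ : ℝ} {A₀ B₀ A₁ B₁ : ℝ → ℝ} (h₀ : AdmPhase κ A₀ B₀) (h₁ : AdmPhase κ A₁ B₁)
    {θ : ℝ} (hθ : θ ∈ Set.Icc (0:ℝ) 1) : AdmPhase κ (seg A₀ A₁ θ) (seg B₀ B₁ θ) := by
  obtain ⟨hθ0, hθ1⟩ := hθ
  have hd : ∀ {f₀ f₁ : ℝ → ℝ}, ContDiff ℝ 1 f₀ → ContDiff ℝ 1 f₁ → ∀ t,
      deriv (_root_.seg f₀ f₁ θ) t = (1 - θ) * deriv f₀ t + θ * deriv f₁ t := by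
    intro f₀ f₁ c₀ c₁ t
    have d₀ := (c₀.differentiable one_ne_zero t).hasDerivAt
    have d₁ := (c₁.differentiable one_ne_zero t).hasDerivAt
    have := (d₀.add ((d₁.sub d₀).const_mul θ)).deriv
    rw [show deriv (_root_.seg f₀ f₁ θ) t = _ from this]; ring
  refine ⟨?_, ?_, fun t => ?_, fun t => ?_, fun t => ?_, ?_, ?_⟩
  · exact h₀.cA.add (contDiff_const.mul (h₁.cA.sub h₀.cA))
  · exact h₀.cB.add (contDiff_const.mul (h₁.cB.sub h₀.cB))
  · have e : _root_.seg A₀ A₁ θ t = (1 - θ) * A₀ t + θ * A₁ t := by unfold _root_.seg; ring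
    rw [e]
    nlinarith [h₀.low t, h₁.low t]
  · rw [hd h₀.cA h₁.cA, abs_le]
    have a₀ := abs_le.1 (h₀.dA t)
    have a₁ := abs_le.1 (h₁.dA t)
    constructor <;> nlinarith
  · rw [hd h₀.cB h₁.cB, abs_le]
    have a₀ := abs_le.1 (h₀.dB t)
    have a₁ := abs_le.1 (h₁.dB t)
    constructor <;> nlinarith
  · simp only [_root_.seg, h₀.pA, h₁.pA]
  · simp only [_root_.seg, h₀.pB, h₁.pB]; ring

/-- Derivative along the segment: `A` contributes `k G'` and `B` contributes `-ik G`. -/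
theorem hasDerivAt_OI (p : ℕ) {A₀ B₀ A₁ B₁ : ℝ → ℝ} (cA₀ : Continuous A₀) (cB₀ : Continuous B₀)
    (cA₁ : Continuous A₁) (cB₁ : Continuous B₁) {g : ℝ → ℂ} (hg : Continuous g) (k : ℕ) (θ : ℝ) :
    HasDerivAt (fun θ => OI (Kr p) (seg A₀ A₁ θ) (seg B₀ B₁ θ) g k)
      (k * OI (Kr (p + 1)) (seg A₀ A₁ θ) (seg B₀ B₁ θ) (fun t => g t * ((A₁ t - A₀ t : ℝ) : ℂ)) k
        + (-Complex.I * k) *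
          OI (Kr p) (seg A₀ A₁ θ) (seg B₀ B₁ θ) (fun t => g t * ((B₁ t - B₀ t : ℝ) : ℂ)) k) θ := by
  have hK := continuous_Kr p
  have hK1 := continuous_Kr (p + 1)
  set F' : ℝ → ℝ → ℂ := fun θ t =>
    k * (g t * ((A₁ t - A₀ t : ℝ) : ℂ) * ((Kr (p + 1) (k * seg A₀ A₁ θ t) : ℝ) : ℂ)
      * Complex.exp (-Complex.I * k * seg B₀ B₁ θ t))
    + (-Complex.I * k) * (g t * ((B₁ t - B₀ t : ℝ) : ℂ) * ((Kr p (k * seg A₀ A₁ θ t) : ℝ) : ℂ)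
      * Complex.exp (-Complex.I * k * seg B₀ B₁ θ t)) with hF'
  have cs : ∀ {f₀ f₁ : ℝ → ℝ}, Continuous f₀ → Continuous f₁ → ∀ θ, Continuous (seg f₀ f₁ θ) := by
    intro f₀ f₁ c₀ c₁ θ
    exact c₀.add (continuous_const.mul (c₁.sub c₀))
  have sA := cs cA₀ cA₁
  have sB := cs cB₀ cB₁
  have hI : ∀ p θ, ∀ f : ℝ → ℂ, Continuous f → Continuous fun t => f t *
      ((Kr p (k * seg A₀ A₁ θ t) : ℝ) : ℂ) * Complex.exp (-Complex.I * k * seg B₀ B₁ θ t) := by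
    intro p θ f hf
    have h1 := continuous_Kr p
    have h2 := sA θ
    have h3 := sB θ
    fun_prop
  have hcA : Continuous fun t => g t * ((A₁ t - A₀ t : ℝ) : ℂ) := by fun_prop
  have hcB : Continuous fun t => g t * ((B₁ t - B₀ t : ℝ) : ℂ) := by fun_prop
  have hF'c : ∀ θ, Continuous (F' θ) := fun θ =>
    (continuous_const.mul (hI (p + 1) θ _ hcA)).add (continuous_const.mul (hI p θ _ hcB))
  have main := (intervalIntegral.hasDerivAt_integral_of_dominated_loc_of_deriv_le (μ := volume)
    (a := 0) (b := 2 * π) (x₀ := θ) (s := Set.univ)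
    (F := fun θ t => g t * ((Kr p (k * seg A₀ A₁ θ t) : ℝ) : ℂ)
      * Complex.exp (-Complex.I * k * seg B₀ B₁ θ t))
    (F' := F')
    (bound := fun t => k * (‖g t‖ * |A₁ t - A₀ t|) + k * (‖g t‖ * |B₁ t - B₀ t|))
    Filter.univ_mem ?_ ?_ ?_ ?_ ?_ ?_).2
  · refine main.congr_deriv ?_
    rw [hF']
    simp only
    rw [intervalIntegral.integral_add, intervalIntegral.integral_const_mul,
      intervalIntegral.integral_const_mul]
    · rfl
    · exact (continuous_const.mul (hI (p + 1) θ _ hcA)).intervalIntegrable _ _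
    · exact (continuous_const.mul (hI p θ _ hcB)).intervalIntegrable _ _
  · exact Filter.Eventually.of_forall fun w => (hI p w g hg).aestronglyMeasurable
  · exact (hI p θ g hg).intervalIntegrable _ _
  · exact (hF'c θ).aestronglyMeasurable
  · refine Filter.Eventually.of_forall fun t _ w _ => ?_
    have he : ‖Complex.exp (-Complex.I * k * seg B₀ B₁ w t)‖ = 1 := by
      have := norm_exp_neg_I (k * seg B₀ B₁ w t)
      rw [← this]; congr 2; push_cast; ring
    rw [hF']
    simp only
    refine (norm_add_le _ _).trans ?_
    simp only [norm_mul, he, Complex.norm_real, Real.norm_eq_abs, norm_neg, Complex.norm_I,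
      Complex.norm_natCast, mul_one, one_mul]
    refine add_le_add ?_ ?_ <;>
      exact mul_le_mul_of_nonneg_left (mul_le_of_le_one_right (by positivity) (abs_Kr_le _ _))
        (by positivity)
  · apply Continuous.intervalIntegrable; fun_prop
  · refine Filter.Eventually.of_forall fun t _ w _ => ?_
    have hs : ∀ f₀ f₁ : ℝ → ℝ, HasDerivAt (fun w => seg f₀ f₁ w t) (f₁ t - f₀ t) w := by
      intro f₀ f₁
      have := ((hasDerivAt_id w).mul_const (f₁ t - f₀ t)).const_add (f₀ t)
      exact this.congr_deriv (one_mul _)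
    have h1 : HasDerivAt (fun w => ((Kr p (k * seg A₀ A₁ w t) : ℝ) : ℂ))
        ((Kr (p + 1) (k * seg A₀ A₁ w t) * (k * (A₁ t - A₀ t)) : ℝ) : ℂ) w :=
      ((hasDerivAt_Kr p _).comp w ((hs A₀ A₁).const_mul (k : ℝ))).ofReal_comp
    have h2 : HasDerivAt (fun w => Complex.exp (-Complex.I * k * seg B₀ B₁ w t))
        (Complex.exp (-Complex.I * k * seg B₀ B₁ w t) * (-Complex.I * k * ((B₁ t - B₀ t : ℝ) : ℂ))) w :=
      ((hs B₀ B₁).ofReal_comp.const_mul (-Complex.I * k)).cexp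
    refine ((h1.const_mul (g t)).mul h2).congr_deriv ?_
    rw [hF']
    push_cast
    ring

/-- Changing the phase costs one derivative on the difference of the phases: of it half is regained
by `block_bound`. The estimate is obtained by differentiating along the segment and testing against
the difference itself. -/
theorem block_diff (p : ℕ) (h1 : BAsym (Kr p)) (h2 : BAsym (Kr (p + 1))) {κ : ℝ} (hκ : 0 < κ) :
    ∃ C : ℝ, 0 ≤ C ∧ ∀ A₀ B₀ A₁ B₁ : ℝ → ℝ, AdmPhase κ A₀ B₀ → AdmPhase κ A₁ B₁ →
      ∀ g : ℝ → ℂ, Continuous g → ∀ M : ℝ, (∀ t, ‖g t‖ ≤ M) → ∀ N : ℕ, 1 ≤ N →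
      ∑ k ∈ Finset.Ico N (2 * N), ‖OI (Kr p) A₁ B₁ g k - OI (Kr p) A₀ B₀ g k‖ ^ 2
        ≤ C * N * M ^ 2 * ((∫ t in (0:ℝ)..(2 * π), |A₁ t - A₀ t| ^ 2) +
          ∫ t in (0:ℝ)..(2 * π), |B₁ t - B₀ t| ^ 2) := by
  have hpi := Real.pi_pos
  obtain ⟨C1, hC1, b1⟩ := block_bound (continuous_Kr p) h1 hκ
  obtain ⟨C2, hC2, b2⟩ := block_bound (continuous_Kr (p + 1)) h2 hκ
  refine ⟨8 * (C1 + C2), by positivity, fun A₀ B₀ A₁ B₁ ha₀ ha₁ g hg M hM N hN => ?_⟩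
  have cA₀ := ha₀.cA.continuous
  have cB₀ := ha₀.cB.continuous
  have cA₁ := ha₁.cA.continuous
  have cB₁ := ha₁.cB.continuous
  have hN0 : (0:ℝ) < N := by exact_mod_cast hN
  set V : ℝ → ℕ → ℂ := fun θ k => OI (Kr p) (seg A₀ A₁ θ) (seg B₀ B₁ θ) g k with hV
  set V' : ℝ → ℕ → ℂ := fun θ k =>
    k * OI (Kr (p + 1)) (seg A₀ A₁ θ) (seg B₀ B₁ θ) (fun t => g t * ((A₁ t - A₀ t : ℝ) : ℂ)) k
        + (-Complex.I * k) *
          OI (Kr p) (seg A₀ A₁ θ) (seg B₀ B₁ θ) (fun t => g t * ((B₁ t - B₀ t : ℝ) : ℂ)) k with hV'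
  have hder : ∀ θ k, HasDerivAt (fun θ => V θ k) (V' θ k) θ := fun θ k =>
    hasDerivAt_OI p cA₀ cB₀ cA₁ cB₁ hg k θ
  set D : ℕ → ℂ := fun k => V 1 k - V 0 k with hD
  have hs0 : ∀ f₀ f₁ : ℝ → ℝ, seg f₀ f₁ 0 = f₀ := by intro f₀ f₁; ext t; simp [seg]
  have hs1 : ∀ f₀ f₁ : ℝ → ℝ, seg f₀ f₁ 1 = f₁ := by intro f₀ f₁; ext t; simp [seg]
  have hDe : ∀ k, OI (Kr p) A₁ B₁ g k - OI (Kr p) A₀ B₀ g k = D k := by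
    intro k; simp only [hD, hV, hs0, hs1]
  simp_rw [hDe]
  set IA := ∫ t in (0:ℝ)..(2 * π), |A₁ t - A₀ t| ^ 2 with hIA
  set IB := ∫ t in (0:ℝ)..(2 * π), |B₁ t - B₀ t| ^ 2 with hIB
  have hIA0 : 0 ≤ IA := intervalIntegral.integral_nonneg (by positivity) fun _ _ => by positivity
  have hIB0 : 0 ≤ IB := intervalIntegral.integral_nonneg (by positivity) fun _ _ => by positivity
  have hgI : ∀ f : ℝ → ℝ, Continuous f → ∫ t in (0:ℝ)..(2 * π), ‖g t * ((f t : ℝ) : ℂ)‖ ^ 2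
      ≤ M ^ 2 * ∫ t in (0:ℝ)..(2 * π), |f t| ^ 2 := by
    intro f hf
    rw [← intervalIntegral.integral_const_mul]
    apply intervalIntegral.integral_mono_on (by positivity)
    · apply Continuous.intervalIntegrable; fun_prop
    · apply Continuous.intervalIntegrable; fun_prop
    · intro t _
      rw [norm_mul, mul_pow, Complex.norm_real, Real.norm_eq_abs]
      gcongr
      exact hM t
  set R := 8 * (C1 + C2) * N * M ^ 2 * (IA + IB) with hR
  have hV'b : ∀ θ ∈ Set.Icc (0:ℝ) 1, ∑ k ∈ Finset.Ico N (2 * N), ‖V' θ k‖ ^ 2 ≤ R := by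
    intro θ hθ
    have had := ha₀.seg ha₁ hθ
    have e1 := (b2 _ _ had (fun t => g t * ((A₁ t - A₀ t : ℝ) : ℂ)) (by fun_prop) N hN)
    have e2 := (b1 _ _ had (fun t => g t * ((B₁ t - B₀ t : ℝ) : ℂ)) (by fun_prop) N hN)
    have f1 := hgI (fun t => A₁ t - A₀ t) (by fun_prop)
    have f2 := hgI (fun t => B₁ t - B₀ t) (by fun_prop)
    have hpt : ∀ k ∈ Finset.Ico N (2 * N), ‖V' θ k‖ ^ 2 ≤ 8 * N ^ 2 *
        (‖OI (Kr (p + 1)) (seg A₀ A₁ θ) (seg B₀ B₁ θ) (fun t => g t * ((A₁ t - A₀ t : ℝ) : ℂ)) k‖ ^ 2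
        + ‖OI (Kr p) (seg A₀ A₁ θ) (seg B₀ B₁ θ) (fun t => g t * ((B₁ t - B₀ t : ℝ) : ℂ)) k‖ ^ 2) := by
      intro k hk
      have hk2 : (k:ℝ) ≤ 2 * N := by exact_mod_cast (Finset.mem_Ico.1 hk).2.le
      rw [hV']
      simp only
      generalize OI (Kr (p + 1)) _ _ _ k = x
      generalize OI (Kr p) _ _ _ k = y
      have h3 : ‖(k:ℂ) * x + (-Complex.I * k) * y‖ ≤ 2 * N * (‖x‖ + ‖y‖) := by
        refine (norm_add_le _ _).trans ?_
        simp only [norm_mul, norm_neg, Complex.norm_I, Complex.norm_natCast, one_mul]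
        rw [← mul_add]; gcongr
      calc _ ≤ (2 * N * (‖x‖ + ‖y‖)) ^ 2 := by gcongr
        _ ≤ _ := by
          have : (‖x‖ + ‖y‖) ^ 2 ≤ 2 * (‖x‖ ^ 2 + ‖y‖ ^ 2) := by nlinarith [sq_nonneg (‖x‖ - ‖y‖)]
          rw [mul_pow]
          calc _ ≤ (2 * (N:ℝ)) ^ 2 * (2 * (‖x‖ ^ 2 + ‖y‖ ^ 2)) := by gcongr
            _ = _ := by ring
    refine (Finset.sum_le_sum hpt).trans ?_
    rw [← Finset.mul_sum, Finset.sum_add_distrib]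
    calc _ ≤ 8 * (N:ℝ) ^ 2 * (C2 / N * (M ^ 2 * IA) + C1 / N * (M ^ 2 * IB)) := by
          gcongr
          · exact e1.trans (by gcongr)
          · exact e2.trans (by gcongr)
      _ = 8 * N * M ^ 2 * (C2 * IA + C1 * IB) := by field_simp
      _ ≤ 8 * N * M ^ 2 * ((C1 + C2) * (IA + IB)) := by
          gcongr
          nlinarith [mul_nonneg hC1 hIA0, mul_nonneg hC2 hIB0]
      _ = R := by rw [hR]; ring
  set S := ∑ k ∈ Finset.Ico N (2 * N), ‖D k‖ ^ 2 with hS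
  have hS0 : 0 ≤ S := Finset.sum_nonneg fun _ _ => by positivity
  -- the increment of `Φ` over `[0,1]` is `S`, and `|Φ'| ≤ S/2 + R/2`, so that `S ≤ R`
  set Φ : ℝ → ℂ := fun θ => ∑ k ∈ Finset.Ico N (2 * N), (starRingEnd ℂ) (D k) * V θ k with hΦ
  have hΦd : ∀ θ, HasDerivAt Φ (∑ k ∈ Finset.Ico N (2 * N), (starRingEnd ℂ) (D k) * V' θ k) θ := by
    intro θ
    exact HasDerivAt.fun_sum fun k _ => (hder θ k).const_mul _
  have hmv := norm_image_sub_le_of_norm_deriv_le_segment_01' (f := Φ)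
    (f' := fun θ => ∑ k ∈ Finset.Ico N (2 * N), (starRingEnd ℂ) (D k) * V' θ k)
    (C := S / 2 + R / 2) (fun θ _ => (hΦd θ).hasDerivWithinAt) (fun θ hθ => by
      refine (norm_sum_le _ _).trans ?_
      have : ∀ k ∈ Finset.Ico N (2 * N), ‖(starRingEnd ℂ) (D k) * V' θ k‖
          ≤ 1 / 2 * ‖D k‖ ^ 2 + 1 / 2 * ‖V' θ k‖ ^ 2 := by
        intro k _
        rw [norm_mul, RCLike.norm_conj]
        nlinarith [sq_nonneg (‖D k‖ - ‖V' θ k‖)]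
      refine (Finset.sum_le_sum this).trans ?_
      rw [Finset.sum_add_distrib, ← Finset.mul_sum, ← Finset.mul_sum]
      have := hV'b θ (Set.Ico_subset_Icc_self hθ)
      linarith)
  have hSe : Φ 1 - Φ 0 = (S : ℂ) := by
    rw [hΦ, hS]
    simp only
    rw [← Finset.sum_sub_distrib]
    push_cast
    refine Finset.sum_congr rfl fun k _ => ?_
    rw [← mul_sub, ← Complex.conj_mul']
  rw [hSe, Complex.norm_real, Real.norm_of_nonneg hS0] at hmv
  linarith

/-! ### Fourier series and Sobolev norms -/

/-- The function with Fourier coefficients `d`. -/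
def trig (d : ℤ → ℂ) (x : ℝ) : ℂ := ∑' m : ℤ, d m * Complex.exp (Complex.I * m * x)

theorem norm_exp_int (m : ℤ) (x : ℝ) : ‖Complex.exp (Complex.I * m * x)‖ = 1 := by
  have := norm_exp_I (m * x)
  rw [← this]; congr 2; push_cast; ring

theorem norm_exp_neg_int (m : ℤ) (x : ℝ) : ‖Complex.exp (-Complex.I * m * x)‖ = 1 := by
  have := norm_exp_int (-m) x
  rw [← this]; congr 2; push_cast; ring

theorem summable_trig {d : ℤ → ℂ} (hd : Summable fun m => ‖d m‖) (x : ℝ) :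
    Summable fun m : ℤ => d m * Complex.exp (Complex.I * m * x) := by
  refine Summable.of_norm ?_
  simpa [norm_mul, norm_exp_int] using hd

theorem norm_trig_le {d : ℤ → ℂ} (hd : Summable fun m => ‖d m‖) (x : ℝ) :
    ‖trig d x‖ ≤ ∑' m, ‖d m‖ := by
  refine tsum_of_norm_bounded hd.hasSum fun m => ?_
  rw [norm_mul, norm_exp_int, mul_one]

theorem continuous_trig {d : ℤ → ℂ} (hd : Summable fun m => ‖d m‖) : Continuous (trig d) := by
  refine continuous_tsum (fun m => by fun_prop) hd fun m x => ?_
  rw [norm_mul, norm_exp_int, mul_one]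

theorem fc_trig {d : ℤ → ℂ} (hd : Summable fun m => ‖d m‖) (j : ℤ) : fc (trig d) j = d j := by
  have hpi := Real.pi_pos
  have hpc : (π : ℂ) ≠ 0 := by exact_mod_cast hpi.ne'
  have key : HasSum (fun m : ℤ => ∫ x in (0:ℝ)..(2 * π),
      d m * Complex.exp (Complex.I * m * x) * Complex.exp (-Complex.I * j * x))
      (∫ x in (0:ℝ)..(2 * π), trig d x * Complex.exp (-Complex.I * j * x)) := by
    refine intervalIntegral.hasSum_integral_of_dominated_convergence (fun m _ => ‖d m‖)
      (fun m => Continuous.aestronglyMeasurable (by fun_prop)) ?_ ?_ ?_ ?_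
    · intro m
      refine Filter.Eventually.of_forall fun x _ => ?_
      rw [norm_mul, norm_mul, norm_exp_int, norm_exp_neg_int, mul_one, mul_one]
    · exact Filter.Eventually.of_forall fun _ _ => hd
    · simp
    · exact Filter.Eventually.of_forall fun x _ => (summable_trig hd x).hasSum.mul_right _
  have hone : ∀ m : ℤ, ∫ x in (0:ℝ)..(2 * π),
      d m * Complex.exp (Complex.I * m * x) * Complex.exp (-Complex.I * j * x)
      = if m = j then 2 * (π : ℂ) * d j else 0 := by
    intro m
    have := integral_exp_int (m - j) 0
    rw [zero_add] at this
    simp_rw [mul_assoc (d m), ← Complex.exp_add]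
    rw [intervalIntegral.integral_const_mul]
    have e : ∀ x : ℝ, Complex.exp (Complex.I * m * x + -Complex.I * j * x)
        = Complex.exp (Complex.I * ((m - j : ℤ) : ℂ) * x) := by
      intro x; congr 1; push_cast; ring
    simp_rw [e]
    rw [this]
    by_cases h : m = j
    · subst h; simp; ring
    · rw [if_neg h, if_neg (sub_ne_zero.2 h), mul_zero]
  simp_rw [hone] at key
  have := key.unique (hasSum_ite_eq j (2 * (π : ℂ) * d j))
  rw [fc, this]
  field_simp

theorem fourierCoeffOn_eq_fc (u : ℝ → ℂ) (j : ℤ) :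
    fourierCoeffOn Real.two_pi_pos u j = fc u j := by
  rw [fourierCoeffOn_eq_integral, fc, sub_zero, Complex.real_smul]
  push_cast
  congr 1
  refine intervalIntegral.integral_congr fun x _ => ?_
  simp only [fourier_coe_apply, smul_eq_mul]
  rw [mul_comm]
  congr 2
  have : (π : ℂ) ≠ 0 := by exact_mod_cast Real.pi_ne_zero
  push_cast
  field_simp

/-- Parseval's identity. -/
theorem hasSum_sq_fc {u : ℝ → ℂ} (hu : Continuous u) :
    HasSum (fun j => ‖fc u j‖ ^ 2) ((2 * π)⁻¹ * ∫ x in (0:ℝ)..(2 * π), ‖u x‖ ^ 2) := by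
  have h := hasSum_sq_fourierCoeffOn (f := u) Real.two_pi_pos (by
    refine (MemLp.of_bound (C := sSup ((fun x => ‖u x‖) '' Set.Icc 0 (2 * π)))
      hu.aestronglyMeasurable ?_)
    refine (ae_restrict_iff' measurableSet_Ioc).2 (Filter.Eventually.of_forall fun x hx => ?_)
    exact le_csSup (isCompact_Icc.image hu.norm).bddAbove ⟨x, Set.Ioc_subset_Icc_self hx, rfl⟩)
  simpa [fourierCoeffOn_eq_fc] using h

theorem integral_sq_trig {d : ℤ → ℂ} (hd : Summable fun m => ‖d m‖) :
    Summable (fun m => ‖d m‖ ^ 2) ∧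
    ∫ x in (0:ℝ)..(2 * π), ‖trig d x‖ ^ 2 = 2 * π * ∑' m, ‖d m‖ ^ 2 := by
  have h := hasSum_sq_fc (continuous_trig hd)
  simp_rw [fc_trig hd] at h
  refine ⟨h.summable, ?_⟩
  rw [h.tsum_eq]
  have := Real.pi_pos
  field_simp

/-- Fourier inversion for absolutely summable coefficients. -/
theorem eq_trig {u : ℝ → ℂ} (hu : Continuous u) (hp : Function.Periodic u (2 * π))
    (hs : Summable fun m => ‖fc u m‖) : u = trig (fc u) := by
  have : Fact (0 < 2 * π) := ⟨Real.two_pi_pos⟩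
  have hpc : (π : ℂ) ≠ 0 := by exact_mod_cast Real.pi_ne_zero
  let f : C(AddCircle (2 * π), ℂ) := ⟨hp.lift, continuous_coinduced_dom.mpr hu⟩
  have hf : ∀ x : ℝ, f (x : AddCircle (2 * π)) = u x := fun x => hp.lift_coe x
  have hfc : ∀ m, fourierCoeff f m = fc u m := by
    intro m
    rw [fourierCoeff_eq_intervalIntegral _ _ 0, fc, zero_add, Complex.real_smul]
    push_cast
    congr 1
    refine intervalIntegral.integral_congr fun x _ => ?_
    simp only [fourier_coe_apply, smul_eq_mul, hf]
    rw [mul_comm]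
    congr 2
    push_cast
    field_simp
  have hsf : Summable (fourierCoeff f) := by
    have : fourierCoeff f = fc u := funext hfc
    rw [this]; exact Summable.of_norm hs
  ext x
  have h := has_pointwise_sum_fourier_series_of_summable hsf (x : AddCircle (2 * π))
  rw [hf] at h
  rw [← h.tsum_eq, trig]
  refine tsum_congr fun m => ?_
  rw [hfc, smul_eq_mul, fourier_coe_apply]
  congr 2
  push_cast
  field_simp

theorem fc_deriv {u u' : ℝ → ℂ} (hu : ∀ x, HasDerivAt u (u' x) x) (hc : Continuous u')
    (hp : Function.Periodic u (2 * π)) (m : ℤ) : fc u' m = Complex.I * m * fc u m := by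
  have hcu : Continuous u := continuous_iff_continuousAt.2 fun x => (hu x).continuousAt
  have hE : ∀ x : ℝ, HasDerivAt (fun x : ℝ => Complex.exp (-Complex.I * m * x))
      (Complex.exp (-Complex.I * m * x) * (-Complex.I * m)) x := by
    intro x
    have := ((hasDerivAt_id x).ofReal_comp.const_mul (-Complex.I * m)).cexp
    simpa using this
  have h := intervalIntegral.integral_mul_deriv_eq_deriv_mul (a := 0) (b := 2 * π)
    (fun x _ => hE x) (fun x _ => hu x) (by apply Continuous.intervalIntegrable; fun_prop)
    (hc.intervalIntegrable _ _)
  have e1 : Complex.exp (-Complex.I * m * ((2 * π : ℝ) : ℂ)) = 1 := by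
    have := Complex.exp_int_mul_two_pi_mul_I (-m)
    rw [← this]; congr 1; push_cast; ring
  have e2 : u (2 * π) = u 0 := by have := hp 0; rwa [zero_add] at this
  rw [e1, e2] at h
  have e3 : Complex.exp (-Complex.I * m * ((0 : ℝ) : ℂ)) = 1 := by simp
  rw [e3, sub_self, zero_sub] at h
  rw [fc, fc]
  have e4 : ∀ x : ℝ, u' x * Complex.exp (-Complex.I * m * x)
      = Complex.exp (-Complex.I * m * x) * u' x := fun x => mul_comm _ _
  simp_rw [e4]
  rw [h]
  have e5 : ∀ x : ℝ, Complex.exp (-Complex.I * m * x) * (-Complex.I * m) * u x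
      = (-Complex.I * m) * (u x * Complex.exp (-Complex.I * m * x)) := fun x => by ring
  simp_rw [e5]
  rw [intervalIntegral.integral_const_mul]
  ring

theorem conj_intervalIntegral (f : ℝ → ℂ) (a b : ℝ) :
    (starRingEnd ℂ) (∫ x in a..b, f x) = ∫ x in a..b, (starRingEnd ℂ) (f x) := by
  rw [intervalIntegral, intervalIntegral, map_sub, integral_conj, integral_conj]

theorem conj_fcR (u : ℝ → ℝ) (m : ℤ) :
    (starRingEnd ℂ) (fc (fun x => (u x : ℂ)) m) = fc (fun x => (u x : ℂ)) (-m) := by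
  rw [fc, fc, map_mul, conj_intervalIntegral]
  congr 1
  · simp [map_ofNat]
  · refine intervalIntegral.integral_congr fun x _ => ?_
    simp only [map_mul, Complex.conj_ofReal, ← Complex.exp_conj, map_neg, Complex.conj_I]
    congr 2
    simp

theorem one_le_jb (j : ℤ) : 1 ≤ jb j := le_max_left _ _
theorem jb_pos (j : ℤ) : 0 < jb j := one_pos.trans_le (one_le_jb j)
theorem abs_le_jb (j : ℤ) : |(j:ℝ)| ≤ jb j := le_max_right _ _
theorem jb_eq {j : ℤ} (h : j ≠ 0) : jb j = |(j:ℝ)| := by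
  refine max_eq_right ?_
  have := Int.one_le_abs h
  exact_mod_cast this

theorem jb_rpow_two_mul (j : ℤ) (s : ℝ) : jb j ^ (2 * s) = (jb j ^ s) ^ 2 := by
  rw [mul_comm, Real.rpow_mul (jb_pos j).le, Real.rpow_two]

theorem memHs.mono {s r : ℝ} (hrs : r ≤ s) {u : ℝ → ℂ} (h : memHs s u) : memHs r u := by
  refine Summable.of_nonneg_of_le (fun j => ?_) (fun j => ?_) h
  · have := (jb_pos j).le; positivity
  · gcongr; exact one_le_jb j

theorem sobNorm_nonneg (s : ℝ) (u : ℝ → ℂ) : 0 ≤ sobNorm s u := Real.sqrt_nonneg _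

theorem sobNorm_sq (s : ℝ) (u : ℝ → ℂ) :
    sobNorm s u ^ 2 = ∑' j : ℤ, jb j ^ (2 * s) * ‖fc u j‖ ^ 2 :=
  Real.sq_sqrt (tsum_nonneg fun j => by have := (jb_pos j).le; positivity)

theorem sobNorm_mono {s r : ℝ} (hrs : r ≤ s) {u : ℝ → ℂ} (h : memHs s u) :
    sobNorm r u ≤ sobNorm s u := by
  refine Real.sqrt_le_sqrt (Summable.tsum_le_tsum (fun j => ?_) (h.mono hrs) h)
  gcongr; exact one_le_jb j

theorem summable_jb_neg_two : Summable fun j : ℤ => (jb j ^ 2)⁻¹ := by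
  have h : Summable fun j : ℤ => (|(j:ℝ)| ^ 2)⁻¹ :=
    (Real.summable_abs_int_rpow (b := 2) (by norm_num)).congr
      fun j => by rw [Real.rpow_neg (abs_nonneg _), Real.rpow_two]
  rw [← (Set.finite_singleton (0:ℤ)).summable_compl_iff] at h ⊢
  refine h.congr fun j => ?_
  simp only [Function.comp]
  rw [jb_eq (j := j) (fun h0 => j.2 h0)]

/-- The constant of the embedding of `H^s` into the functions with `Σ jb^{s-1} |û| < ∞`. -/
def kEmb : ℝ := Real.sqrt (∑' j : ℤ, (jb j ^ 2)⁻¹)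

theorem kEmb_pos : 0 < kEmb := by
  refine Real.sqrt_pos.2 (summable_jb_neg_two.tsum_pos (fun j => by
    have := jb_pos j; positivity) 0 (by have := jb_pos 0; positivity))

/-- Cauchy-Schwarz with the weight `jb⁻¹`. -/
theorem embed {s : ℝ} {u : ℝ → ℂ} (h : memHs s u) :
    Summable (fun j => jb j ^ (s - 1) * ‖fc u j‖) ∧
    ∑' j, jb j ^ (s - 1) * ‖fc u j‖ ≤ kEmb * sobNorm s u := by
  have e : ∀ j : ℤ, jb j ^ (s - 1) * ‖fc u j‖ = (jb j)⁻¹ * (jb j ^ s * ‖fc u j‖) := by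
    intro j
    rw [Real.rpow_sub (jb_pos j), Real.rpow_one]; ring
  have h1 : Summable fun j : ℤ => (jb j)⁻¹ ^ (2:ℝ) :=
    summable_jb_neg_two.congr fun j => by rw [Real.rpow_two, inv_pow]
  have h2 : Summable fun j : ℤ => (jb j ^ s * ‖fc u j‖) ^ (2:ℝ) :=
    h.congr fun j => by rw [Real.rpow_two, mul_pow, jb_rpow_two_mul]
  have hc := Real.summable_and_inner_le_Lp_mul_Lq_tsum_of_nonneg Real.HolderConjugate.two_two
    (fun j => (inv_pos.2 (jb_pos j)).le)
    (fun j => mul_nonneg (Real.rpow_nonneg (jb_pos j).le _) (norm_nonneg _)) h1 h2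
  simp_rw [e]
  refine ⟨hc.1, hc.2.trans (le_of_eq ?_)⟩
  rw [kEmb, sobNorm, Real.sqrt_eq_rpow, Real.sqrt_eq_rpow]
  congr 2
  · exact tsum_congr fun j => by rw [Real.rpow_two, inv_pow]
  · congr 1
    ext j
    rw [Real.rpow_two, mul_pow, jb_rpow_two_mul]

/-! ### Small phases -/

/-- The weight `jb^{2s}` is dominated by the squared Fourier multiplier `|j|^{2n}` of an `n`-th
derivative, which is square summable by Parseval. -/
theorem memHs_of_smooth {a : ℝ → ℝ} (ha : smoothPer a) (s : ℝ) :
    memHs s (fun x => (a x : ℂ)) := by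
  obtain ⟨hc, hp⟩ := ha
  set u : ℕ → ℝ → ℂ := fun n x => ((iteratedDeriv n a x : ℝ) : ℂ) with hu
  have hcn : ∀ n, Continuous (iteratedDeriv n a) := fun n =>
    hc.continuous_iteratedDeriv n (by exact_mod_cast le_top)
  have hder : ∀ n x, HasDerivAt (u n) (u (n + 1) x) x := by
    intro n x
    have h1 : Differentiable ℝ (iteratedDeriv n a) :=
      hc.differentiable_iteratedDeriv n (by exact_mod_cast ENat.natCast_lt_top n)
    have h2 := (h1 x).hasDerivAt
    rw [← iteratedDeriv_succ] at h2
    exact h2.ofReal_comp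
  have hper : ∀ n, Function.Periodic (iteratedDeriv n a) (2 * π) := by
    intro n
    induction n with
    | zero => simpa using hp
    | succ n ih =>
      intro x
      rw [iteratedDeriv_succ, ← deriv_comp_add_const]
      congr 1
      ext y; exact ih y
  have hco : ∀ n m, fc (u n) m = (Complex.I * m) ^ n * fc (u 0) m := by
    intro n m
    induction n with
    | zero => simp
    | succ n ih =>
      rw [fc_deriv (hder n) (by have := hcn (n + 1); fun_prop)
        (fun x => by simp only [hu, hper n x]) m, ih, pow_succ]
      ring
  have h0 : u 0 = fun x => (a x : ℂ) := by ext x; simp [hu]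
  obtain ⟨n, hn⟩ := exists_nat_ge s
  have hs0 := (hasSum_sq_fc (u := u 0) (by have := hcn 0; fun_prop)).summable
  have hsn := (hasSum_sq_fc (u := u n) (by have := hcn n; fun_prop)).summable
  rw [← h0]
  refine Summable.of_nonneg_of_le (fun j => ?_) (fun j => ?_) (hs0.add hsn)
  · have := (jb_pos j).le; positivity
  by_cases hj : j = 0
  · subst hj
    have : jb 0 = 1 := by simp [jb]
    rw [this, Real.one_rpow, one_mul]
    linarith [sq_nonneg ‖fc (u n) 0‖]
  · have h1 : jb j ^ (2 * s) ≤ (|(j:ℝ)| ^ n) ^ 2 := by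
      rw [jb_rpow_two_mul, ← jb_eq hj, ← Real.rpow_natCast (jb j) n]
      have := jb_pos j
      gcongr
      exact one_le_jb j
    have h2 : ‖fc (u n) j‖ ^ 2 = (|(j:ℝ)| ^ n) ^ 2 * ‖fc (u 0) j‖ ^ 2 := by
      rw [hco, norm_mul, mul_pow, norm_pow, norm_mul, Complex.norm_I, one_mul,
        Complex.norm_intCast]
    rw [h2]
    have := mul_le_mul_of_nonneg_right h1 (sq_nonneg ‖fc (u 0) j‖)
    linarith [sq_nonneg ‖fc (u 0) j‖]

/-- Fourier coefficients of a real function, with `Σ jb² |d| ≤ η`. -/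
structure SmallC (η : ℝ) (d : ℤ → ℂ) : Prop where
  symm : ∀ m, (starRingEnd ℂ) (d m) = d (-m)
  sum : Summable fun m => jb m ^ 2 * ‖d m‖
  le : ∑' m, jb m ^ 2 * ‖d m‖ ≤ η

/-- Truncation of a sequence to a finite set of frequencies. -/
def lo (F : Finset ℤ) (d : ℤ → ℂ) (m : ℤ) : ℂ := if m ∈ F then d m else 0

/-- The real part of `trig d`; equal to `trig d` for symmetric coefficients. -/
def rt (d : ℤ → ℂ) (x : ℝ) : ℝ := (trig d x).re

theorem norm_lo_le (F : Finset ℤ) (d : ℤ → ℂ) (m : ℤ) : ‖lo F d m‖ ≤ ‖d m‖ := by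
  unfold lo; split_ifs <;> simp

theorem SmallC.trunc {η : ℝ} {d : ℤ → ℂ} (h : SmallC η d) {F : Finset ℤ}
    (hF : ∀ m, m ∈ F ↔ -m ∈ F) : SmallC η (lo F d) := by
  have hle : ∀ m, jb m ^ 2 * ‖lo F d m‖ ≤ jb m ^ 2 * ‖d m‖ := fun m =>
    mul_le_mul_of_nonneg_left (norm_lo_le F d m) (sq_nonneg _)
  have hs : Summable fun m => jb m ^ 2 * ‖lo F d m‖ :=
    Summable.of_nonneg_of_le (fun m => by positivity) hle h.sum
  refine ⟨fun m => ?_, hs, (hs.tsum_le_tsum hle h.sum).trans h.le⟩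
  unfold lo
  by_cases hm : m ∈ F
  · rw [if_pos hm, if_pos ((hF m).1 hm), h.symm]
  · rw [if_neg hm, if_neg (fun h' => hm ((hF m).2 h')), map_zero]

theorem SmallC.summable_jb {η : ℝ} {d : ℤ → ℂ} (h : SmallC η d) :
    Summable fun m => jb m * ‖d m‖ :=
  Summable.of_nonneg_of_le (fun m => mul_nonneg (jb_pos m).le (norm_nonneg _)) (fun m =>
    mul_le_mul_of_nonneg_right (by nlinarith [one_le_jb m]) (norm_nonneg _)) h.sum

theorem SmallC.summable {η : ℝ} {d : ℤ → ℂ} (h : SmallC η d) : Summable fun m => ‖d m‖ :=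
  Summable.of_nonneg_of_le (fun _ => norm_nonneg _) (fun m =>
    le_mul_of_one_le_left (norm_nonneg _) (one_le_jb m)) h.summable_jb

theorem SmallC.norm_sum_jb_le {η : ℝ} {d : ℤ → ℂ} (h : SmallC η d) : ∑' m, jb m * ‖d m‖ ≤ η :=
  (h.summable_jb.tsum_le_tsum (fun m =>
    mul_le_mul_of_nonneg_right (by nlinarith [one_le_jb m]) (norm_nonneg _)) h.sum).trans h.le

theorem SmallC.norm_sum_le {η : ℝ} {d : ℤ → ℂ} (h : SmallC η d) : ∑' m, ‖d m‖ ≤ η :=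
  (h.summable.tsum_le_tsum (fun m =>
    le_mul_of_one_le_left (norm_nonneg _) (one_le_jb m)) h.summable_jb).trans h.norm_sum_jb_le

theorem SmallC.coe_rt {η : ℝ} {d : ℤ → ℂ} (h : SmallC η d) (x : ℝ) :
    ((rt d x : ℝ) : ℂ) = trig d x := by
  refine Complex.conj_eq_iff_re.1 ?_
  rw [trig, Complex.conj_tsum, ← (Equiv.neg ℤ).tsum_eq]
  refine tsum_congr fun m => ?_
  simp only [Equiv.neg_apply, map_mul, ← Complex.exp_conj, Complex.conj_I, Complex.conj_ofReal]
  rw [h.symm, neg_neg]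
  congr 2
  simp

theorem hasDerivAt_trig {d : ℤ → ℂ} (h : Summable fun m => jb m * ‖d m‖) (x : ℝ) :
    HasDerivAt (trig d) (trig (fun m => Complex.I * m * d m) x) x := by
  have hs : Summable fun m => ‖d m‖ := Summable.of_nonneg_of_le (fun m => norm_nonneg _) (fun m =>
    le_mul_of_one_le_left (norm_nonneg _) (one_le_jb m)) h
  refine hasDerivAt_tsum (g := fun m x => d m * Complex.exp (Complex.I * m * (x : ℝ)))
    (g' := fun m x => Complex.I * m * d m * Complex.exp (Complex.I * m * (x : ℝ))) h
    (fun m y => ?_) (fun m y => ?_) (summable_trig hs 0) x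
  · have := (((hasDerivAt_id y).ofReal_comp.const_mul (Complex.I * m)).cexp).const_mul (d m)
    refine this.congr_deriv ?_
    simp; ring
  · rw [norm_mul, norm_exp_int, mul_one, norm_mul, norm_mul, Complex.norm_I, one_mul,
      Complex.norm_intCast]
    exact mul_le_mul_of_nonneg_right (abs_le_jb m) (norm_nonneg _)

theorem summable_deriv_coeff {d : ℤ → ℂ} (h : Summable fun m => jb m * ‖d m‖) :
    Summable fun m : ℤ => ‖Complex.I * m * d m‖ :=
  Summable.of_nonneg_of_le (fun m => norm_nonneg _) (fun m => by
    rw [norm_mul, norm_mul, Complex.norm_I, one_mul, Complex.norm_intCast]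
    exact mul_le_mul_of_nonneg_right (abs_le_jb m) (norm_nonneg _)) h

theorem SmallC.hasDerivAt_rt {η : ℝ} {d : ℤ → ℂ} (h : SmallC η d) (x : ℝ) :
    HasDerivAt (rt d) (rt (fun m => Complex.I * m * d m) x) x :=
  Complex.reCLM.hasFDerivAt.comp_hasDerivAt x (hasDerivAt_trig h.summable_jb x)

theorem SmallC.contDiff_rt {η : ℝ} {d : ℤ → ℂ} (h : SmallC η d) : ContDiff ℝ 1 (rt d) := by
  rw [contDiff_one_iff_deriv]
  refine ⟨fun x => (h.hasDerivAt_rt x).differentiableAt, ?_⟩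
  rw [funext fun x => (h.hasDerivAt_rt x).deriv]
  exact Complex.continuous_re.comp (continuous_trig (summable_deriv_coeff h.summable_jb))

theorem SmallC.abs_rt_le {η : ℝ} {d : ℤ → ℂ} (h : SmallC η d) (x : ℝ) : |rt d x| ≤ η :=
  (Complex.abs_re_le_norm _).trans ((norm_trig_le h.summable x).trans h.norm_sum_le)

theorem SmallC.abs_deriv_rt_le {η : ℝ} {d : ℤ → ℂ} (h : SmallC η d) (x : ℝ) :
    |deriv (rt d) x| ≤ η := by
  rw [(h.hasDerivAt_rt x).deriv]
  have hs := summable_deriv_coeff h.summable_jb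
  refine (Complex.abs_re_le_norm _).trans ((norm_trig_le hs x).trans ?_)
  refine (hs.tsum_le_tsum (fun m => ?_) h.summable_jb).trans h.norm_sum_jb_le
  rw [norm_mul, norm_mul, Complex.norm_I, one_mul, Complex.norm_intCast]
  exact mul_le_mul_of_nonneg_right (abs_le_jb m) (norm_nonneg _)

theorem trig_periodic (d : ℤ → ℂ) : Function.Periodic (trig d) (2 * π) := by
  intro x
  unfold trig
  refine tsum_congr fun m => ?_
  congr 1
  rw [show Complex.I * m * ((x + 2 * π : ℝ) : ℂ) = Complex.I * m * x + m * (2 * π * Complex.I) by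
    push_cast; ring, Complex.exp_add, Complex.exp_int_mul_two_pi_mul_I, mul_one]

/-- Small coefficients `d, e` give the admissible pair `A + Σ d_m e^{imt}`, `t + Σ e_m e^{imt}`. -/
theorem SmallC.adm {η A : ℝ} {d e : ℤ → ℂ} (hd : SmallC η d) (he : SmallC η e)
    (h1 : η ≤ A / 2) (h2 : η ≤ 1 / 4) :
    AdmPhase (A / 2) (fun t => A + rt d t) (fun t => t + rt e t) := by
  have hp : ∀ d, rt d (2 * π) = rt d 0 := by
    intro d
    have := trig_periodic d 0
    rw [zero_add] at this
    rw [rt, rt, this]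
  have dd := hd.contDiff_rt.differentiable one_ne_zero
  have de := he.contDiff_rt.differentiable one_ne_zero
  refine ⟨contDiff_const.add hd.contDiff_rt, contDiff_id.add he.contDiff_rt, fun t => ?_,
    fun t => ?_, fun t => ?_, ?_, ?_⟩
  · have := abs_le.1 (hd.abs_rt_le t); linarith
  · rw [deriv_const_add]; exact (hd.abs_deriv_rt_le t).trans h2
  · rw [deriv_fun_add differentiableAt_fun_id (de t), deriv_id'', add_sub_cancel_left]
    exact (he.abs_deriv_rt_le t).trans h2
  · simp only [hp]
  · simp only [hp]; ring

/-! ### Contour shift for low frequencies -/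

/-- Moving the contour of integration of an entire periodic function. -/
theorem contour_shift {F : ℂ → ℂ} (hd : Differentiable ℂ F) (hp : ∀ z, F (z + 2 * π) = F z)
    (y : ℝ) : ∫ t in (0:ℝ)..(2 * π), F t = ∫ t in (0:ℝ)..(2 * π), F (t + y * Complex.I) := by
  have h := Complex.integral_boundary_rect_eq_zero_of_differentiableOn F 0
    (2 * π + y * Complex.I) hd.differentiableOn
  have e1 : (2 * (π:ℂ) + y * Complex.I).re = 2 * π := by simp
  have e2 : (2 * (π:ℂ) + y * Complex.I).im = y := by simp
  rw [e1, e2] at h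
  simp only [Complex.zero_re, Complex.zero_im, Complex.ofReal_zero, zero_mul, add_zero,
    zero_add] at h
  have e3 : ∀ t : ℝ, F (((2 * π : ℝ) : ℂ) + t * Complex.I) = F (t * Complex.I) := by
    intro t
    rw [← hp (t * Complex.I)]
    congr 1; push_cast; ring
  simp_rw [e3] at h
  linear_combination h

/-- The entire extension of a trigonometric polynomial. -/
def tp (F : Finset ℤ) (d : ℤ → ℂ) (z : ℂ) : ℂ := ∑ m ∈ F, d m * Complex.exp (Complex.I * m * z)

theorem tp_ofReal (F : Finset ℤ) (d : ℤ → ℂ) (x : ℝ) : tp F d x = trig (lo F d) x := by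
  unfold tp trig
  rw [tsum_eq_sum (s := F)]
  · refine Finset.sum_congr rfl fun m hm => ?_
    rw [lo, if_pos hm]
  · intro m hm
    rw [lo, if_neg hm, zero_mul]

theorem differentiable_tp (F : Finset ℤ) (d : ℤ → ℂ) : Differentiable ℂ (tp F d) := by
  unfold tp
  fun_prop

theorem tp_periodic (F : Finset ℤ) (d : ℤ → ℂ) (z : ℂ) : tp F d (z + 2 * π) = tp F d z := by
  unfold tp
  refine Finset.sum_congr rfl fun m _ => ?_
  rw [show Complex.I * m * (z + 2 * π) = Complex.I * m * z + m * (2 * π * Complex.I) by ring,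
    Complex.exp_add, Complex.exp_int_mul_two_pi_mul_I, mul_one]

/-- On the line `Im z = -η` a frequency `m` grows at most by `e^{|m|η}`. -/
theorem norm_exp_shift (m : ℤ) (t η : ℝ) :
    ‖Complex.exp (Complex.I * m * (t + ((-η : ℝ) : ℂ) * Complex.I))‖ = Real.exp (m * η) := by
  rw [Complex.norm_exp]
  congr 1
  simp

theorem norm_tp_le {F : Finset ℤ} {d : ℤ → ℂ} {t η G : ℝ}
    (hG : ∀ m ∈ F, Real.exp (|(m:ℝ)| * η) ≤ G) (hη : 0 ≤ η) :
    ‖tp F d (t + ((-η : ℝ) : ℂ) * Complex.I)‖ ≤ G * ∑ m ∈ F, ‖d m‖ := by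
  unfold tp
  rw [Finset.mul_sum]
  refine (norm_sum_le _ _).trans (Finset.sum_le_sum fun m hm => ?_)
  rw [norm_mul, norm_exp_shift, mul_comm]
  refine mul_le_mul_of_nonneg_right ((Real.exp_le_exp.2 ?_).trans (hG m hm)) (norm_nonneg _)
  exact mul_le_mul_of_nonneg_right (le_abs_self _) hη

/-- A symmetric trigonometric polynomial is real on the real axis, so on the line `Im z = -η` its
imaginary part is at most `η` times a bound for its derivative. -/
theorem abs_im_tp_le {F : Finset ℤ} {d : ℤ → ℂ} {η η₀ : ℝ} (hF : ∀ m, m ∈ F ↔ -m ∈ F)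
    (hd : SmallC η₀ d) {t : ℝ} (hη : 0 ≤ η)
    (hG : ∀ m ∈ F, |(m:ℝ)| * Real.exp (|(m:ℝ)| * η) ≤ 2 * jb m ^ 2) :
    |(tp F d (t + ((-η : ℝ) : ℂ) * Complex.I)).im| ≤ 2 * η * η₀ := by
  have hr : (tp F d t).im = 0 := by
    rw [tp_ofReal, ← (hd.trunc hF).coe_rt]; exact Complex.ofReal_im _
  have h1 : (tp F d (t + ((-η : ℝ) : ℂ) * Complex.I)).im
      = (tp F d (t + ((-η : ℝ) : ℂ) * Complex.I) - tp F d t).im := by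
    rw [Complex.sub_im, hr, sub_zero]
  rw [h1]
  refine (Complex.abs_im_le_norm _).trans ?_
  unfold tp
  rw [← Finset.sum_sub_distrib]
  refine (norm_sum_le _ _).trans ?_
  have hb : ∀ m ∈ F, ‖d m * Complex.exp (Complex.I * m * (t + ((-η : ℝ) : ℂ) * Complex.I))
      - d m * Complex.exp (Complex.I * m * t)‖ ≤ 2 * η * (jb m ^ 2 * ‖d m‖) := by
    intro m hm
    have e : d m * Complex.exp (Complex.I * m * (t + ((-η : ℝ) : ℂ) * Complex.I))
      - d m * Complex.exp (Complex.I * m * t)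
      = d m * (Complex.exp (Complex.I * m * t) * ((Real.exp (m * η) - 1 : ℝ) : ℂ)) := by
      rw [mul_add, Complex.exp_add]
      have : Complex.I * m * (((-η : ℝ) : ℂ) * Complex.I) = ((m * η : ℝ) : ℂ) := by
        push_cast
        linear_combination (-(m:ℂ) * η) * Complex.I_sq
      rw [this]
      push_cast
      ring
    rw [e, norm_mul, norm_mul, norm_exp_int, one_mul, Complex.norm_real, Real.norm_eq_abs]
    have hx : |Real.exp (m * η) - 1| ≤ |(m:ℝ)| * η * Real.exp (|(m:ℝ)| * η) := by
      have habs : |(m:ℝ) * η| = |(m:ℝ)| * η := by rw [abs_mul, abs_of_nonneg hη]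
      have h := le_abs_self ((m:ℝ) * η)
      have h' := neg_abs_le ((m:ℝ) * η)
      rw [habs] at h h'
      set w := |(m:ℝ)| * η
      have hw : 0 ≤ w := by positivity
      have hE := Real.one_le_exp hw
      -- `e^w - 1 ≤ w e^w` and `1 - e^{-w} ≤ w`
      have a1 : Real.exp w - 1 ≤ w * Real.exp w := by
        have := Real.add_one_le_exp (-w)
        rw [Real.exp_neg] at this
        have hp := Real.exp_pos w
        have := mul_le_mul_of_nonneg_right this hp.le
        rw [inv_mul_cancel₀ hp.ne'] at this
        linarith
      have a2 := Real.add_one_le_exp (-w)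
      have a3 := Real.exp_le_exp.2 h
      have a4 := Real.exp_le_exp.2 h'
      rw [abs_le]
      constructor <;> nlinarith
    calc ‖d m‖ * |Real.exp (m * η) - 1| ≤ ‖d m‖ * (|(m:ℝ)| * η * Real.exp (|(m:ℝ)| * η)) := by gcongr
      _ = η * ‖d m‖ * (|(m:ℝ)| * Real.exp (|(m:ℝ)| * η)) := by ring
      _ ≤ η * ‖d m‖ * (2 * jb m ^ 2) :=
        mul_le_mul_of_nonneg_left (hG m hm) (by positivity)
      _ = _ := by ring
  refine (Finset.sum_le_sum hb).trans ?_
  rw [← Finset.mul_sum]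
  gcongr
  exact (hd.sum.sum_le_tsum F (fun m _ => by positivity)).trans hd.le

/-- The non-stationary estimate: with trigonometric polynomials as phases and amplitude, shifting the
contour by `-η` gains `e^{-kη/2}` and loses only the growth `G` of the amplitude. -/
theorem norm_OI_shift_le (p : ℕ) {A η η₀ G : ℝ} {F : Finset ℤ} (hF : ∀ m, m ∈ F ↔ -m ∈ F)
    {d e g : ℤ → ℂ} (hd : SmallC η₀ d) (he : SmallC η₀ e) (h8 : η₀ ≤ 1 / 8) (hη : 0 ≤ η)
    (hG1 : ∀ m ∈ F, |(m:ℝ)| * Real.exp (|(m:ℝ)| * η) ≤ 2 * jb m ^ 2)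
    (hG2 : ∀ m ∈ F, Real.exp (|(m:ℝ)| * η) ≤ G) (hG : 0 ≤ G) (k : ℕ) :
    ‖OI (Kr p) (fun t => A + rt (lo F d) t) (fun t => t + rt (lo F e) t) (trig (lo F g)) k‖
      ≤ 2 * π * (Real.exp (-(k * η / 2)) * (G * ∑ m ∈ F, ‖g m‖)) := by
  set Φ : ℂ → ℂ := fun z => tp F g z * Kc p (k * (A + tp F d z))
    * Complex.exp (-Complex.I * k * (z + tp F e z)) with hΦ
  have hKc : Differentiable ℂ (Kc p) := fun z => (hasDerivAt_Kc p z).differentiableAt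
  have hΦd : Differentiable ℂ Φ := by
    have h1 := differentiable_tp F g
    have h2 := differentiable_tp F d
    have h3 := differentiable_tp F e
    have h4 : Differentiable ℂ fun z => Kc p (k * (A + tp F d z)) :=
      hKc.comp ((h2.const_add (A:ℂ)).const_mul (k:ℂ))
    fun_prop
  have hΦp : ∀ z, Φ (z + 2 * π) = Φ z := by
    intro z
    simp only [hΦ, tp_periodic]
    congr 1
    rw [show -Complex.I * k * (z + 2 * π + tp F e z)
      = -Complex.I * k * (z + tp F e z) + (-(k:ℤ) : ℤ) * (2 * π * Complex.I) by push_cast; ring,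
      Complex.exp_add, Complex.exp_int_mul_two_pi_mul_I, mul_one]
  have hOI : OI (Kr p) (fun t => A + rt (lo F d) t) (fun t => t + rt (lo F e) t) (trig (lo F g)) k
      = ∫ t in (0:ℝ)..(2 * π), Φ t := by
    unfold OI
    refine intervalIntegral.integral_congr fun t _ => ?_
    simp only [hΦ]
    rw [← Kc_ofReal, tp_ofReal, tp_ofReal, tp_ofReal, ← (hd.trunc hF).coe_rt,
      ← (he.trunc hF).coe_rt]
    push_cast
    rfl
  rw [hOI, contour_shift hΦd hΦp (-η)]
  have hb : ∀ t : ℝ, ‖Φ (t + ((-η : ℝ) : ℂ) * Complex.I)‖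
      ≤ Real.exp (-(k * η / 2)) * (G * ∑ m ∈ F, ‖g m‖) := by
    intro t
    have i1 := abs_im_tp_le (t := t) hF hd hη hG1
    have i2 := abs_im_tp_le (t := t) hF he hη hG1
    have i3 := norm_tp_le (d := g) (t := t) hG2 hη
    simp only [hΦ]
    set z : ℂ := t + ((-η : ℝ) : ℂ) * Complex.I with hz
    have hzi : z.im = -η := by simp [hz]
    rw [norm_mul, norm_mul, Complex.norm_exp]
    have k1 : ‖Kc p (k * (A + tp F d z))‖ ≤ Real.exp (k * |(tp F d z).im|) := by
      refine (norm_Kc_le p _).trans (Real.exp_le_exp.2 (le_of_eq ?_))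
      rw [show ((k:ℂ) * (A + tp F d z)).im = k * (tp F d z).im by simp, abs_mul, Nat.abs_cast]
    have k2 : (-Complex.I * k * (z + tp F e z)).re ≤ k * (-η + |(tp F e z).im|) := by
      have : (-Complex.I * k * (z + tp F e z)).re = k * (-η + (tp F e z).im) := by
        simp [hzi]
      rw [this]
      gcongr
      exact le_abs_self _
    calc _ ≤ (G * ∑ m ∈ F, ‖g m‖) * Real.exp (k * |(tp F d z).im|)
          * Real.exp (k * (-η + |(tp F e z).im|)) := by gcongr
      _ = (G * ∑ m ∈ F, ‖g m‖) * Real.exp (k * |(tp F d z).im| + k * (-η + |(tp F e z).im|)) := by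
          rw [Real.exp_add]; ring
      _ ≤ (G * ∑ m ∈ F, ‖g m‖) * Real.exp (-(k * η / 2)) := by
          have hS : 0 ≤ ∑ m ∈ F, ‖g m‖ := Finset.sum_nonneg fun _ _ => norm_nonneg _
          gcongr
          have hk : (0:ℝ) ≤ k := Nat.cast_nonneg k
          have : |(tp F d z).im| + |(tp F e z).im| - η ≤ -(η / 2) := by nlinarith
          nlinarith [mul_le_mul_of_nonneg_left this hk]
      _ = _ := by ring
  have := intervalIntegral.norm_integral_le_of_norm_le_const (a := 0) (b := 2 * π)
    (f := fun t : ℝ => Φ (t + ((-η : ℝ) : ℂ) * Complex.I)) fun t _ => hb t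
  rw [sub_zero, abs_of_pos Real.two_pi_pos] at this
  linarith

/-- The frequencies `|m| ≤ N/q`. -/
def Flo (q N : ℕ) : Finset ℤ := (Finset.Icc (-(N:ℤ)) N).filter fun m => q * |m| ≤ N

theorem mem_Flo {q N : ℕ} (hq : 1 ≤ q) (m : ℤ) : m ∈ Flo q N ↔ (q:ℤ) * |m| ≤ N := by
  unfold Flo
  rw [Finset.mem_filter, Finset.mem_Icc, ← abs_le]
  refine and_iff_right_of_imp fun h => le_trans ?_ h
  have : (1:ℤ) ≤ q := by exact_mod_cast hq
  nlinarith [abs_nonneg m]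

theorem Flo_symm {q N : ℕ} (hq : 1 ≤ q) (m : ℤ) : m ∈ Flo q N ↔ -m ∈ Flo q N := by
  rw [mem_Flo hq, mem_Flo hq, abs_neg]

/-- The low-low interaction is negligible to any prescribed order `r`. -/
theorem low_low (r : ℝ) (hr : 0 ≤ r) : ∃ q : ℕ, 1 ≤ q ∧ ∃ C : ℝ, 0 ≤ C ∧ ∀ (p : ℕ) (A η₀ : ℝ)
    (d e g : ℤ → ℂ), SmallC η₀ d → SmallC η₀ e → η₀ ≤ 1 / 8 → ∀ N : ℕ, 1 ≤ N → ∀ k : ℕ, N ≤ k →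
    ‖OI (Kr p) (fun t => A + rt (lo (Flo q N) d) t) (fun t => t + rt (lo (Flo q N) e) t)
      (trig (lo (Flo q N) g)) k‖ ≤ C * (N:ℝ) ^ (-r) * ∑ m ∈ Flo q N, ‖g m‖ := by
  have hpi := Real.pi_pos
  -- with `η = κ log N / N` the shift gains `N^{-κ/2}`, and a cut-off at `|m| ≤ N/(2κ)` keeps the
  -- growth of the amplitude below `N^{1/2}`
  set κ : ℝ := 2 * r + 1 with hκ
  have hκ0 : 0 < κ := by positivity
  obtain ⟨q, hq⟩ := exists_nat_ge (2 * κ)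
  have hq1 : 1 ≤ q := by
    have : (0:ℝ) < q := by linarith
    exact_mod_cast this
  have hq0 : (0:ℝ) < q := by exact_mod_cast hq1
  -- `κ log N / √N → 0`
  obtain ⟨N₀, hN₀⟩ : ∃ N₀ : ℕ, ∀ N : ℕ, N₀ ≤ N → κ * Real.log N ≤ Real.log 2 * (N:ℝ) ^ (1/2:ℝ) := by
    have h1 := (isLittleO_log_rpow_atTop (r := 1/2) (by norm_num)).bound
      (c := Real.log 2 / κ) (by have := Real.log_pos one_lt_two; positivity)
    have h2 := tendsto_natCast_atTop_atTop (R := ℝ) |>.eventually h1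
    obtain ⟨N₀, h3⟩ := Filter.eventually_atTop.1 h2
    refine ⟨N₀, fun N hN => ?_⟩
    have h4 := h3 N hN
    rw [Real.norm_eq_abs, Real.norm_eq_abs, abs_of_nonneg (by positivity : (0:ℝ) ≤ (N:ℝ)^(1/2:ℝ))] at h4
    have h5 := (le_abs_self _).trans h4
    calc κ * Real.log N ≤ κ * (Real.log 2 / κ * (N:ℝ) ^ (1/2:ℝ)) := by gcongr
      _ = _ := by field_simp
  refine ⟨q, hq1, 2 * π * ((N₀:ℝ) ^ r + 1), by positivity, ?_⟩
  intro p A η₀ d e g hd he h8 N hN k hk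
  have hNp : (0:ℝ) < N := by exact_mod_cast hN
  have hF := Flo_symm (N := N) hq1
  have hS : 0 ≤ ∑ m ∈ Flo q N, ‖g m‖ := Finset.sum_nonneg fun _ _ => norm_nonneg _
  by_cases hNN : N₀ ≤ N
  · set η : ℝ := κ * Real.log N / N with hη
    have hlog : 0 ≤ Real.log N := Real.log_nonneg (by exact_mod_cast hN)
    have hη0 : 0 ≤ η := by positivity
    have hG2 : ∀ m ∈ Flo q N, Real.exp (|(m:ℝ)| * η) ≤ (N:ℝ) ^ (1/2:ℝ) := by
      intro m hm
      have h1 : (q:ℝ) * |(m:ℝ)| ≤ N := by exact_mod_cast (mem_Flo hq1 m).1 hm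
      rw [Real.rpow_def_of_pos hNp]
      refine Real.exp_le_exp.2 ?_
      have h2 : |(m:ℝ)| * κ ≤ N / 2 := by nlinarith [abs_nonneg (m:ℝ)]
      calc |(m:ℝ)| * η = (|(m:ℝ)| * κ) * (Real.log N / N) := by rw [hη]; ring
        _ ≤ N / 2 * (Real.log N / N) := by gcongr
        _ = _ := by field_simp
    have hG1 : ∀ m ∈ Flo q N, |(m:ℝ)| * Real.exp (|(m:ℝ)| * η) ≤ 2 * jb m ^ 2 := by
      intro m hm
      by_cases hm0 : m = 0
      · subst hm0; simp; positivity
      have hm1 : 1 ≤ |(m:ℝ)| := by exact_mod_cast Int.one_le_abs hm0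
      rw [jb_eq hm0]
      -- for `|m| ≤ √N` the exponential is at most `2`, beyond it is at most `√N ≤ |m|`
      by_cases hms : |(m:ℝ)| ≤ (N:ℝ) ^ (1/2:ℝ)
      · have h1 : |(m:ℝ)| * η ≤ Real.log 2 := by
          calc |(m:ℝ)| * η ≤ (N:ℝ) ^ (1/2:ℝ) * η := by gcongr
            _ = (N:ℝ) ^ (1/2:ℝ) * (κ * Real.log N) / N := by rw [hη]; ring
            _ ≤ (N:ℝ) ^ (1/2:ℝ) * (Real.log 2 * (N:ℝ) ^ (1/2:ℝ)) / N :=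
                div_le_div_of_nonneg_right
                  (mul_le_mul_of_nonneg_left (hN₀ N hNN) (by positivity)) hNp.le
            _ = Real.log 2 * ((N:ℝ) ^ (1/2:ℝ) * (N:ℝ) ^ (1/2:ℝ)) / N := by ring
            _ = Real.log 2 := by
                rw [← Real.rpow_add hNp]; norm_num; field_simp
        have h2 := Real.exp_le_exp.2 h1
        rw [Real.exp_log two_pos] at h2
        nlinarith
      · push Not at hms
        have := hG2 m hm
        nlinarith
    refine (norm_OI_shift_le p hF hd he h8 hη0 hG1 hG2 (by positivity) k).trans ?_
    have h1 : Real.exp (-(k * η / 2)) ≤ (N:ℝ) ^ (-(κ / 2)) := by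
      rw [Real.rpow_def_of_pos hNp]
      refine Real.exp_le_exp.2 ?_
      have hkN : (N:ℝ) ≤ k := by exact_mod_cast hk
      have : N * η = κ * Real.log N := by rw [hη]; field_simp
      nlinarith [mul_le_mul_of_nonneg_right hkN hη0]
    have h2 : (N:ℝ) ^ (-(κ / 2)) * (N:ℝ) ^ (1/2:ℝ) = (N:ℝ) ^ (-r) := by
      rw [← Real.rpow_add hNp]; congr 1; rw [hκ]; ring
    calc _ ≤ 2 * π * ((N:ℝ) ^ (-(κ / 2)) * ((N:ℝ) ^ (1/2:ℝ) * ∑ m ∈ Flo q N, ‖g m‖)) := by gcongr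
      _ = 2 * π * (0 + 1) * (N:ℝ) ^ (-r) * ∑ m ∈ Flo q N, ‖g m‖ := by rw [← h2]; ring
      _ ≤ _ := by gcongr; positivity
  · push Not at hNN
    -- for the finitely many `N < N₀` no shift is needed
    have h0 := norm_OI_shift_le p (A := A) (η := 0) (G := 1) (g := g) hF hd he h8 le_rfl
      (fun m _ => by
        rw [mul_zero, Real.exp_zero, mul_one]
        nlinarith [abs_le_jb m, one_le_jb m]) (fun m _ => by simp) zero_le_one k
    refine h0.trans ?_
    have h1 : 1 ≤ (N₀:ℝ) ^ r * (N:ℝ) ^ (-r) := by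
      rw [Real.rpow_neg hNp.le, ← div_eq_mul_inv, one_le_div (by positivity)]
      have : (N:ℝ) ≤ N₀ := by exact_mod_cast hNN.le
      gcongr
    have h2 : 0 ≤ (N:ℝ) ^ (-r) := by positivity
    rw [mul_zero, zero_div, neg_zero, Real.exp_zero, one_mul, one_mul]
    calc _ = 2 * π * 1 * ∑ m ∈ Flo q N, ‖g m‖ := by ring
      _ ≤ 2 * π * (((N₀:ℝ) ^ r + 1) * (N:ℝ) ^ (-r)) * ∑ m ∈ Flo q N, ‖g m‖ := by
          gcongr; linarith
      _ = _ := by ring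

/-! ### Dyadic summation -/

/-- The complementary truncation to `lo`. -/
def hi (F : Finset ℤ) (d : ℤ → ℂ) (m : ℤ) : ℂ := if m ∈ F then 0 else d m

theorem norm_hi_le (F : Finset ℤ) (d : ℤ → ℂ) (m : ℤ) : ‖hi F d m‖ ≤ ‖d m‖ := by
  unfold hi; split_ifs <;> simp

theorem summable_lo {d : ℤ → ℂ} (hd : Summable fun m => ‖d m‖) (F : Finset ℤ) :
    Summable fun m => ‖lo F d m‖ :=
  Summable.of_nonneg_of_le (fun _ => norm_nonneg _) (norm_lo_le F d) hd

theorem summable_hi {d : ℤ → ℂ} (hd : Summable fun m => ‖d m‖) (F : Finset ℤ) :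
    Summable fun m => ‖hi F d m‖ :=
  Summable.of_nonneg_of_le (fun _ => norm_nonneg _) (norm_hi_le F d) hd

theorem trig_lo_add_hi {d : ℤ → ℂ} (hd : Summable fun m => ‖d m‖) (F : Finset ℤ) (x : ℝ) :
    trig d x = trig (lo F d) x + trig (hi F d) x := by
  unfold trig
  rw [← (summable_trig (summable_lo hd F) x).tsum_add (summable_trig (summable_hi hd F) x)]
  refine tsum_congr fun m => ?_
  rw [← add_mul]
  congr 1
  unfold lo hi
  split_ifs <;> simp

/-- The `ℓ²` mass of the frequencies outside `F`. -/
def tail (F : Finset ℤ) (d : ℤ → ℂ) : ℝ := ∑' m, ‖hi F d m‖ ^ 2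

theorem tail_nonneg (F : Finset ℤ) (d : ℤ → ℂ) : 0 ≤ tail F d := tsum_nonneg fun _ => sq_nonneg _

theorem integral_rt_sub_le {d : ℤ → ℂ} (hd : Summable fun m => ‖d m‖) (F : Finset ℤ) :
    ∫ t in (0:ℝ)..(2 * π), |rt d t - rt (lo F d) t| ^ 2 ≤ 2 * π * tail F d := by
  have hh := summable_hi hd F
  rw [tail, ← (integral_sq_trig hh).2]
  have c1 := continuous_trig hd
  have c2 := continuous_trig (summable_lo hd F)
  have c3 := continuous_trig hh
  refine intervalIntegral.integral_mono_on (by positivity) ?_ ?_ fun t _ => ?_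
  · apply Continuous.intervalIntegrable; unfold rt; fun_prop
  · apply Continuous.intervalIntegrable; fun_prop
  · rw [rt, rt, trig_lo_add_hi hd F t, Complex.add_re, add_sub_cancel_left]
    gcongr
    exact Complex.abs_re_le_norm _

theorem OI_add {G A B : ℝ → ℝ} (hG : Continuous G) (hA : Continuous A) (hB : Continuous B)
    {g₁ g₂ : ℝ → ℂ} (h₁ : Continuous g₁) (h₂ : Continuous g₂) (k : ℕ) :
    OI G A B (fun t => g₁ t + g₂ t) k = OI G A B g₁ k + OI G A B g₂ k := by
  unfold OI
  rw [← intervalIntegral.integral_add]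
  · refine intervalIntegral.integral_congr fun t _ => ?_
    simp only; ring
  · apply Continuous.intervalIntegrable; fun_prop
  · apply Continuous.intervalIntegrable; fun_prop

/-- The estimate on one dyadic block: `f` is split into high and low frequencies, and for the low ones
the phases are compared with their low-frequency truncations. -/
theorem block_est (p : ℕ) (h1 : BAsym (Kr p)) (h2 : BAsym (Kr (p + 1))) {A : ℝ} (hA : 0 < A)
    (r : ℝ) (hr : 0 ≤ r) : ∃ q : ℕ, 1 ≤ q ∧ ∃ C : ℝ, 0 ≤ C ∧ ∀ (η₀ : ℝ) (d e f : ℤ → ℂ),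
    SmallC η₀ d → SmallC η₀ e → η₀ ≤ 1 / 8 → η₀ ≤ A / 2 → Summable (fun m => ‖f m‖) →
    ∀ N : ℕ, 1 ≤ N →
    ∑ k ∈ Finset.Ico N (2 * N),
        ‖OI (Kr p) (fun t => A + rt d t) (fun t => t + rt e t) (trig f) k‖ ^ 2
      ≤ C * (tail (Flo q N) f / N + N * (∑' m, ‖f m‖) ^ 2 *
          (tail (Flo q N) d + tail (Flo q N) e + ((N:ℝ) ^ (-r)) ^ 2)) := by
  have hpi := Real.pi_pos
  obtain ⟨C1, hC1, b1⟩ := block_bound (continuous_Kr p) h1 (half_pos hA)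
  obtain ⟨C2, hC2, b2⟩ := block_diff p h1 h2 (half_pos hA)
  obtain ⟨q, hq, C3, hC3, b3⟩ := low_low r hr
  refine ⟨q, hq, 3 * (2 * π * C1 + 2 * π * C2 + C3 ^ 2), by positivity, ?_⟩
  intro η₀ d e f hd he h8 hA2 hf N hN
  set F := Flo q N with hFdef
  have hF := Flo_symm (N := N) hq
  have h4 : η₀ ≤ 1 / 4 := h8.trans (by norm_num)
  have ad := hd.adm he hA2 h4
  have adN := (hd.trunc hF).adm (he.trunc hF) hA2 h4
  set A₁ : ℝ → ℝ := fun t => A + rt d t with hA₁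
  set B₁ : ℝ → ℝ := fun t => t + rt e t with hB₁
  set A₀ : ℝ → ℝ := fun t => A + rt (lo F d) t with hA₀
  set B₀ : ℝ → ℝ := fun t => t + rt (lo F e) t with hB₀
  have clo := continuous_trig (summable_lo hf F)
  have chi := continuous_trig (summable_hi hf F)
  set M := ∑' m, ‖f m‖ with hM
  have hM0 : 0 ≤ M := tsum_nonneg fun _ => norm_nonneg _
  have e1 := b1 _ _ ad (trig (hi F f)) chi N hN
  rw [(integral_sq_trig (summable_hi hf F)).2] at e1
  have e2 := b2 _ _ _ _ adN ad (trig (lo F f)) clo M (fun t =>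
    (norm_trig_le (summable_lo hf F) t).trans
      ((summable_lo hf F).tsum_le_tsum (norm_lo_le F f) hf)) N hN
  have i1 : ∫ t in (0:ℝ)..(2 * π), |A₁ t - A₀ t| ^ 2 ≤ 2 * π * tail F d := by
    simpa only [hA₁, hA₀, add_sub_add_left_eq_sub] using integral_rt_sub_le hd.summable F
  have i2 : ∫ t in (0:ℝ)..(2 * π), |B₁ t - B₀ t| ^ 2 ≤ 2 * π * tail F e := by
    simpa only [hB₁, hB₀, add_sub_add_left_eq_sub] using integral_rt_sub_le he.summable F
  have e3 : ∀ k ∈ Finset.Ico N (2 * N), ‖OI (Kr p) A₀ B₀ (trig (lo F f)) k‖ ^ 2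
      ≤ (C3 * (N:ℝ) ^ (-r) * M) ^ 2 := by
    intro k hk
    gcongr
    refine (b3 p A η₀ d e f hd he h8 N hN k (Finset.mem_Ico.1 hk).1).trans ?_
    gcongr
    exact hf.sum_le_tsum _ fun _ _ => norm_nonneg _
  have e3' := Finset.sum_le_sum e3
  rw [Finset.sum_const, Nat.card_Ico, nsmul_eq_mul, show 2 * N - N = N by omega] at e3'
  have hsplit : ∀ k, ‖OI (Kr p) A₁ B₁ (trig f) k‖ ^ 2 ≤ 3 * (‖OI (Kr p) A₁ B₁ (trig (hi F f)) k‖ ^ 2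
      + ‖OI (Kr p) A₁ B₁ (trig (lo F f)) k - OI (Kr p) A₀ B₀ (trig (lo F f)) k‖ ^ 2
      + ‖OI (Kr p) A₀ B₀ (trig (lo F f)) k‖ ^ 2) := by
    intro k
    have : OI (Kr p) A₁ B₁ (trig f) k = OI (Kr p) A₁ B₁ (trig (lo F f)) k
        + OI (Kr p) A₁ B₁ (trig (hi F f)) k := by
      rw [← OI_add (continuous_Kr p) ad.cA.continuous ad.cB.continuous clo chi,
        funext (trig_lo_add_hi hf F)]
    rw [this]
    generalize OI (Kr p) A₁ B₁ (trig (lo F f)) k = x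
    generalize OI (Kr p) A₁ B₁ (trig (hi F f)) k = y
    generalize OI (Kr p) A₀ B₀ (trig (lo F f)) k = z
    have h3 : ‖x + y‖ ≤ ‖y‖ + ‖x - z‖ + ‖z‖ := by
      calc ‖x + y‖ = ‖y + (x - z) + z‖ := by congr 1; ring
        _ ≤ _ := norm_add₃_le
    exact norm_add_three_sq_le _ _ _ (norm_nonneg _) h3
  refine (Finset.sum_le_sum fun k _ => hsplit k).trans ?_
  rw [← Finset.mul_sum, Finset.sum_add_distrib, Finset.sum_add_distrib]
  have t1 := tail_nonneg F f
  have t2 := tail_nonneg F d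
  have t3 := tail_nonneg F e
  set w := (N:ℝ) ^ (-r) with hw
  have hN0 : (0:ℝ) < N := by exact_mod_cast hN
  have P : 0 ≤ tail F f / N := by positivity
  have Q : 0 ≤ N * M ^ 2 * (tail F d + tail F e) := by positivity
  have R : 0 ≤ N * M ^ 2 * w ^ 2 := by positivity
  calc _ ≤ 3 * (C1 / N * (2 * π * tail F f) + C2 * N * M ^ 2 * (2 * π * tail F d + 2 * π * tail F e)
        + N * (C3 * w * M) ^ 2) := by
        gcongr
        · exact e1
        · exact e2.trans (by gcongr)
    _ = 3 * (2 * π * C1 * (tail F f / N) + 2 * π * C2 * (N * M ^ 2 * (tail F d + tail F e))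
        + C3 ^ 2 * (N * M ^ 2 * w ^ 2)) := by ring
    _ ≤ 3 * ((2 * π * C1 + 2 * π * C2 + C3 ^ 2) * (tail F f / N)
        + (2 * π * C1 + 2 * π * C2 + C3 ^ 2) * (N * M ^ 2 * (tail F d + tail F e))
        + (2 * π * C1 + 2 * π * C2 + C3 ^ 2) * (N * M ^ 2 * w ^ 2)) := by
        have p1 : 0 ≤ 2 * π * C1 := by positivity
        have p2 : 0 ≤ 2 * π * C2 := by positivity
        have p3 : 0 ≤ C3 ^ 2 := by positivity
        gcongr <;> linarith
    _ = _ := by ring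

theorem sum_pow_two_lt (X J : ℕ) :
    ∑ j ∈ (Finset.range J).filter (fun j => 2 ^ j < X), 2 ^ j ≤ 2 * X := by
  by_cases hX : X = 0
  · subst hX; simp
  have h := Nat.geomSum_lt (m := 2) (n := Nat.log 2 X + 1)
    (s := (Finset.range J).filter (fun j => 2 ^ j < X)) le_rfl (fun k hk => by
      have := (Finset.mem_filter.1 hk).2
      exact Nat.lt_succ_of_le (Nat.le_log_of_pow_le one_lt_two this.le))
  have h2 := Nat.pow_log_le_self 2 hX
  rw [pow_succ] at h
  omega

/-- Dyadic tails, weighted by `N^{2σ}`, sum up to at most a constant times the square of the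
`σ`-Sobolev norm: the frequency `m` occurs only in the tails with `N < q|m|`. -/
theorem dyadic_tail (q : ℕ) (hq : 1 ≤ q) {σ : ℝ} (hσ : 1 ≤ 2 * σ) : ∃ C : ℝ, 0 ≤ C ∧
    ∀ d : ℤ → ℂ, Summable (fun m => jb m ^ (2 * σ) * ‖d m‖ ^ 2) → ∀ J : ℕ,
    ∑ j ∈ Finset.range J, (((2 ^ j : ℕ) : ℝ)) ^ (2 * σ) * tail (Flo q (2 ^ j)) d
      ≤ C * ∑' m, jb m ^ (2 * σ) * ‖d m‖ ^ 2 := by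
  have hq0 : (0:ℝ) < q := by exact_mod_cast hq
  refine ⟨2 * (q:ℝ) ^ (2 * σ), by positivity, fun d hd J => ?_⟩
  have hd2 : Summable fun m => ‖d m‖ ^ 2 := Summable.of_nonneg_of_le (fun _ => sq_nonneg _)
    (fun m => le_mul_of_one_le_left (sq_nonneg _)
      (Real.one_le_rpow (one_le_jb m) (by linarith))) hd
  have hhi : ∀ F, Summable fun m => ‖hi F d m‖ ^ 2 := fun F =>
    Summable.of_nonneg_of_le (fun _ => sq_nonneg _) (fun m => by
      have := norm_hi_le F d m
      gcongr) hd2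
  unfold tail
  simp_rw [← tsum_mul_left]
  rw [← Summable.tsum_finsetSum fun j _ => (hhi _).mul_left _]
  refine Summable.tsum_le_tsum (fun m => ?_) (summable_sum fun j _ => (hhi _).mul_left _)
    (hd.mul_left _)
  set X : ℕ := q * m.natAbs with hX
  have hXr : (X:ℝ) = q * |(m:ℝ)| := by
    rw [hX]; push_cast; rw [Nat.cast_natAbs]; push_cast; rfl
  have hterm : ∀ j ∈ Finset.range J, (((2 ^ j : ℕ) : ℝ)) ^ (2 * σ) * ‖hi (Flo q (2 ^ j)) d m‖ ^ 2
      = if 2 ^ j < X then (((2 ^ j : ℕ) : ℝ)) ^ (2 * σ) * ‖d m‖ ^ 2 else 0 := by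
    intro j _
    have hiff : m ∈ Flo q (2 ^ j) ↔ ¬ (2 ^ j < X) := by
      rw [mem_Flo hq, not_lt, hX, ← Int.natCast_natAbs]
      exact_mod_cast Iff.rfl
    unfold hi
    by_cases h : 2 ^ j < X
    · rw [if_pos h, if_neg (fun h' => hiff.1 h' h)]
    · rw [if_neg h, if_pos (hiff.2 h)]; simp
  rw [Finset.sum_congr rfl hterm, ← Finset.sum_filter, ← Finset.sum_mul, ← mul_assoc]
  refine mul_le_mul_of_nonneg_right ?_ (sq_nonneg _)
  by_cases hX0 : X = 0
  · rw [hX0]; simp; have := (jb_pos m).le; positivity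
  have hXp : (0:ℝ) < X := by exact_mod_cast Nat.pos_of_ne_zero hX0
  have hb : ∀ j ∈ (Finset.range J).filter (fun j => 2 ^ j < X), (((2 ^ j : ℕ) : ℝ)) ^ (2 * σ)
      ≤ (X:ℝ) ^ (2 * σ - 1) * ((2 ^ j : ℕ) : ℝ) := by
    intro j hj
    have hp : (0:ℝ) < ((2 ^ j : ℕ) : ℝ) := by positivity
    have hlt : ((2 ^ j : ℕ) : ℝ) ≤ X := by exact_mod_cast (Finset.mem_filter.1 hj).2.le
    calc (((2 ^ j : ℕ) : ℝ)) ^ (2 * σ) = (((2 ^ j : ℕ) : ℝ)) ^ (2 * σ - 1) * ((2 ^ j : ℕ) : ℝ) := by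
          rw [← Real.rpow_add_one hp.ne']; congr 1; ring
      _ ≤ _ := by gcongr
  refine (Finset.sum_le_sum hb).trans ?_
  rw [← Finset.mul_sum]
  have hs : ∑ j ∈ (Finset.range J).filter (fun j => 2 ^ j < X), (((2 ^ j : ℕ) : ℝ)) ≤ 2 * X := by
    exact_mod_cast sum_pow_two_lt X J
  calc (X:ℝ) ^ (2 * σ - 1) * ∑ j ∈ (Finset.range J).filter (fun j => 2 ^ j < X), (((2 ^ j : ℕ) : ℝ))
      ≤ (X:ℝ) ^ (2 * σ - 1) * (2 * X) := by gcongr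
    _ = 2 * (X:ℝ) ^ (2 * σ) := by
        rw [mul_left_comm, ← Real.rpow_add_one hXp.ne']; congr 2; ring
    _ ≤ 2 * (q * jb m) ^ (2 * σ) := by
        rw [hXr]
        have := abs_le_jb m
        gcongr
    _ = _ := by rw [Real.mul_rpow hq0.le (jb_pos m).le]; ring

/-- The tame estimate for one of the two components, on positive frequencies. The low-low errors are
taken of order `r = s + 1` so that they add up to a geometric series. -/
theorem seq_est (p : ℕ) (h1 : BAsym (Kr p)) (h2 : BAsym (Kr (p + 1))) {A : ℝ} (hA : 0 < A)
    {s : ℝ} (hs : 1 ≤ s) : ∃ C : ℝ, 0 ≤ C ∧ ∀ (η₀ : ℝ) (d e f : ℤ → ℂ),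
    SmallC η₀ d → SmallC η₀ e → η₀ ≤ 1 / 8 → η₀ ≤ A / 2 → Summable (fun m => ‖f m‖) →
    Summable (fun m => jb m ^ (2 * (s + 1 / 2)) * ‖d m‖ ^ 2) →
    Summable (fun m => jb m ^ (2 * (s + 1 / 2)) * ‖e m‖ ^ 2) →
    Summable (fun m => jb m ^ (2 * (s - 1 / 2)) * ‖f m‖ ^ 2) → ∀ J : ℕ,
    ∑ k ∈ Finset.Ico (1:ℕ) (2 ^ J), (k:ℝ) ^ (2 * s) *
        ‖OI (Kr p) (fun t => A + rt d t) (fun t => t + rt e t) (trig f) k‖ ^ 2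
      ≤ C * ((∑' m, jb m ^ (2 * (s - 1 / 2)) * ‖f m‖ ^ 2) + (∑' m, ‖f m‖) ^ 2 *
          ((∑' m, jb m ^ (2 * (s + 1 / 2)) * ‖d m‖ ^ 2) +
            (∑' m, jb m ^ (2 * (s + 1 / 2)) * ‖e m‖ ^ 2) + 1)) := by
  obtain ⟨q, hq, C1, hC1, b1⟩ := block_est p h1 h2 hA (s + 1) (by linarith)
  obtain ⟨C2, hC2, b2⟩ := dyadic_tail q hq (σ := s - 1 / 2) (by linarith)
  obtain ⟨C3, hC3, b3⟩ := dyadic_tail q hq (σ := s + 1 / 2) (by linarith)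
  refine ⟨(2:ℝ) ^ (2 * s) * C1 * (C2 + C3 + 2), by positivity, ?_⟩
  intro η₀ d e f hd he h8 hA2 hf sd se sf J
  set c : ℕ → ℝ := fun k =>
    ‖OI (Kr p) (fun t => A + rt d t) (fun t => t + rt e t) (trig f) k‖ ^ 2 with hc
  set M := ∑' m, ‖f m‖ with hM
  have hM0 : 0 ≤ M := tsum_nonneg fun _ => norm_nonneg _
  have hsplit : ∑ k ∈ Finset.Ico (1:ℕ) (2 ^ J), (k:ℝ) ^ (2 * s) * c k
      = ∑ j ∈ Finset.range J, ∑ k ∈ Finset.Ico ((2:ℕ) ^ j) (2 * 2 ^ j), (k:ℝ) ^ (2 * s) * c k := by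
    induction J with
    | zero => simp
    | succ J ih =>
      rw [Finset.sum_range_succ, ← ih, ← pow_succ',
        Finset.sum_Ico_consecutive _ Nat.one_le_two_pow (Nat.pow_le_pow_right two_pos (Nat.le_succ J))]
  rw [hsplit]
  have hblock : ∀ j ∈ Finset.range J,
      ∑ k ∈ Finset.Ico ((2:ℕ) ^ j) (2 * 2 ^ j), (k:ℝ) ^ (2 * s) * c k
      ≤ (2:ℝ) ^ (2 * s) * C1 * (((2 ^ j : ℕ) : ℝ) ^ (2 * (s - 1 / 2)) * tail (Flo q (2 ^ j)) f
        + M ^ 2 * (((2 ^ j : ℕ) : ℝ) ^ (2 * (s + 1 / 2)) * tail (Flo q (2 ^ j)) d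
        + ((2 ^ j : ℕ) : ℝ) ^ (2 * (s + 1 / 2)) * tail (Flo q (2 ^ j)) e + (1 / 2) ^ j)) := by
    intro j _
    have hN1 : 1 ≤ 2 ^ j := Nat.one_le_two_pow
    have hb := b1 η₀ d e f hd he h8 hA2 hf (2 ^ j) hN1
    have hhalf : ((1:ℝ) / 2) ^ j = (((2 ^ j : ℕ) : ℝ))⁻¹ := by push_cast; rw [one_div, inv_pow]
    rw [hhalf]
    rw [← hM] at hb
    generalize hNdef : 2 ^ j = N at *
    have hN : (0:ℝ) < N := by exact_mod_cast hN1
    have hk : ∀ k ∈ Finset.Ico N (2 * N), (k:ℝ) ^ (2 * s) * c k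
        ≤ ((2:ℝ) ^ (2 * s) * (N:ℝ) ^ (2 * s)) * c k := by
      intro k hk
      have : (k:ℝ) ≤ 2 * N := by exact_mod_cast (Finset.mem_Ico.1 hk).2.le
      rw [← Real.mul_rpow two_pos.le hN.le]
      refine mul_le_mul_of_nonneg_right ?_ (sq_nonneg _)
      gcongr
    refine (Finset.sum_le_sum hk).trans ?_
    rw [← Finset.mul_sum]
    calc _ ≤ ((2:ℝ) ^ (2 * s) * (N:ℝ) ^ (2 * s)) * _ := mul_le_mul_of_nonneg_left hb (by positivity)
      _ = _ := by
        have r1 : (N:ℝ) ^ (2 * (s - 1 / 2)) = (N:ℝ) ^ (2 * s) / N := by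
          rw [← Real.rpow_sub_one hN.ne']; congr 1; ring
        have r2 : (N:ℝ) ^ (2 * (s + 1 / 2)) = (N:ℝ) ^ (2 * s) * N := by
          rw [← Real.rpow_add_one hN.ne']; congr 1; ring
        have r3 : ((N:ℝ) ^ (-(s + 1))) ^ 2 = ((N:ℝ) ^ (2 * s) * N * N)⁻¹ := by
          rw [← Real.rpow_add_one hN.ne', ← Real.rpow_add_one hN.ne', ← Real.rpow_natCast,
            ← Real.rpow_mul hN.le, ← Real.rpow_neg hN.le]
          congr 1; push_cast; ring
        rw [r1, r2, r3]
        have : (N:ℝ) ^ (2 * s) ≠ 0 := by positivity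
        field_simp
  refine (Finset.sum_le_sum hblock).trans ?_
  rw [← Finset.mul_sum, Finset.sum_add_distrib, ← Finset.mul_sum, Finset.sum_add_distrib,
    Finset.sum_add_distrib]
  have g1 := b2 f sf J
  have g2 := b3 d sd J
  have g3 := b3 e se J
  have g4 : ∑ j ∈ Finset.range J, ((1:ℝ) / 2) ^ j ≤ 2 := sum_geometric_two_le J
  have nn : ∀ (σ : ℝ) (d : ℤ → ℂ), 0 ≤ ∑' m, jb m ^ (2 * σ) * ‖d m‖ ^ 2 := fun σ d =>
    tsum_nonneg fun m => mul_nonneg (Real.rpow_nonneg (jb_pos m).le _) (sq_nonneg _)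
  have n1 := nn (s - 1 / 2) f
  have n2 := nn (s + 1 / 2) d
  have n3 := nn (s + 1 / 2) e
  set P := ∑' m, jb m ^ (2 * (s - 1 / 2)) * ‖f m‖ ^ 2
  set Q := ∑' m, jb m ^ (2 * (s + 1 / 2)) * ‖d m‖ ^ 2
  set R := ∑' m, jb m ^ (2 * (s + 1 / 2)) * ‖e m‖ ^ 2
  calc _ ≤ (2:ℝ) ^ (2 * s) * C1 * (C2 * P + M ^ 2 * (C3 * Q + C3 * R + 2)) := by gcongr
    _ ≤ (2:ℝ) ^ (2 * s) * C1 * ((C2 + C3 + 2) * P + M ^ 2 *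
        ((C2 + C3 + 2) * Q + (C2 + C3 + 2) * R + (C2 + C3 + 2) * 1)) := by
        gcongr <;> linarith
    _ = _ := by ring

/-! ### The tame estimate -/

theorem J1_neg (x : ℝ) : J1 (-x) = -J1 x := by
  set f : ℝ → ℂ := fun φ => Complex.exp (Complex.I * (x : ℂ) * (Real.sin φ : ℂ)) *
    Complex.exp (-Complex.I * (φ : ℂ)) with hf
  have hper : Function.Periodic f (2 * π) := by
    intro φ
    simp only [hf, Real.sin_add_two_pi]
    congr 1
    rw [show -Complex.I * ((φ + 2 * π : ℝ) : ℂ)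
      = -Complex.I * φ + ((-1 : ℤ) : ℂ) * (2 * π * Complex.I) by push_cast; ring,
      Complex.exp_add, Complex.exp_int_mul_two_pi_mul_I, mul_one]
  have h1 : ∫ φ in (0:ℝ)..(2 * π), f (φ + π) = ∫ φ in (0:ℝ)..(2 * π), f φ := by
    rw [intervalIntegral.integral_comp_add_right, zero_add, add_comm (2 * π),
      hper.intervalIntegral_add_eq π 0, zero_add]
  have h2 : ∀ φ : ℝ, f (φ + π) = -(Complex.exp (Complex.I * ((-x : ℝ) : ℂ) * (Real.sin φ : ℂ)) *
    Complex.exp (-Complex.I * (φ : ℂ))) := by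
    intro φ
    simp only [hf, Real.sin_add_pi]
    rw [show -Complex.I * ((φ + π : ℝ) : ℂ) = -Complex.I * φ + -(π * Complex.I) by push_cast; ring,
      Complex.exp_add, Complex.exp_neg (π * Complex.I), Complex.exp_pi_mul_I]
    rw [show Complex.I * (x : ℂ) * ((-Real.sin φ : ℝ) : ℂ)
      = Complex.I * ((-x : ℝ) : ℂ) * (Real.sin φ : ℂ) by push_cast; ring]
    norm_num
  simp_rw [h2] at h1
  rw [intervalIntegral.integral_neg] at h1
  unfold J1
  rw [← neg_eq_iff_eq_neg.2 (neg_eq_iff_eq_neg.1 h1), ← Complex.neg_re, mul_neg, neg_neg]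

theorem deriv_J1_neg (x : ℝ) : deriv J1 (-x) = deriv J1 x := by
  have h := deriv_comp_neg J1 x
  rw [funext J1_neg, deriv.fun_neg] at h
  linarith

/-- The nonzero Fourier coefficients of `dS(a,b)[α,β]`. -/
def cf (A : ℝ) (a b α β : ℝ → ℝ) (k : ℤ) : ℂ :=
  ∫ t in (0:ℝ)..(2 * π),
        (((deriv J1 ((k : ℝ) * (A + a t)) * α t : ℝ) : ℂ)
            - Complex.I * ((J1 ((k : ℝ) * (A + a t)) * β t : ℝ) : ℂ)) *
          Complex.exp (-Complex.I * (k : ℂ) * ((t + b t : ℝ) : ℂ))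

theorem cf_neg (A : ℝ) (a b α β : ℝ → ℝ) (k : ℤ) :
    cf A a b α β (-k) = (starRingEnd ℂ) (cf A a b α β k) := by
  unfold cf
  rw [conj_intervalIntegral]
  refine intervalIntegral.integral_congr fun t _ => ?_
  simp only [map_mul, map_sub, Complex.conj_ofReal, Complex.conj_I, ← Complex.exp_conj, map_neg]
  rw [show (((-k : ℤ) : ℝ)) * (A + a t) = -((k:ℝ) * (A + a t)) by push_cast; ring, J1_neg,
    deriv_J1_neg, show (starRingEnd ℂ) (k:ℂ) = k by simp]
  push_cast
  congr 1
  · ring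
  · congr 1; ring

theorem cf_nat (A : ℝ) {a b α β : ℝ → ℝ} (ha : Continuous a) (hb : Continuous b)
    (hα : Continuous α) (hβ : Continuous β) (k : ℕ) :
    cf A a b α β k = OI (Kr 1) (fun t => A + a t) (fun t => t + b t) (fun t => (α t : ℂ)) k
      - Complex.I * OI (Kr 0) (fun t => A + a t) (fun t => t + b t) (fun t => (β t : ℂ)) k := by
  have h0 := continuous_Kr 0
  have h1 := continuous_Kr 1
  unfold cf OI
  rw [← intervalIntegral.integral_const_mul, ← intervalIntegral.integral_sub]
  · refine intervalIntegral.integral_congr fun t _ => ?_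
    simp only [deriv_J1]
    simp only [J1_eq_Kr]
    push_cast
    ring
  · apply Continuous.intervalIntegrable; fun_prop
  · apply Continuous.intervalIntegrable; fun_prop

theorem summable_fc {u : ℝ → ℂ} (h : memHs 2 u) :
    Summable (fun m => ‖fc u m‖) ∧ ∑' m, ‖fc u m‖ ≤ kEmb * sobNorm 2 u := by
  have h1 := embed (h.mono (r := 1) (by norm_num))
  simp only [sub_self, Real.rpow_zero, one_mul] at h1
  exact ⟨h1.1, h1.2.trans (mul_le_mul_of_nonneg_left (sobNorm_mono (by norm_num) h) kEmb_pos.le)⟩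

theorem smallC_of_smooth {a : ℝ → ℝ} (ha : smoothPer a) {η : ℝ} (h : kEmb * sobNormR 3 a ≤ η) :
    SmallC η (fc (fun x => (a x : ℂ))) := by
  have h3 := embed (memHs_of_smooth ha 3)
  have e : ∀ j : ℤ, jb j ^ ((3:ℝ) - 1) = jb j ^ 2 := fun j => by
    rw [← Real.rpow_two]; norm_num
  simp only [e] at h3
  exact ⟨fun m => conj_fcR a m, h3.1, h3.2.trans h⟩

theorem smooth_eq_rt {a : ℝ → ℝ} (ha : smoothPer a) : a = rt (fc (fun x => (a x : ℂ))) := by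
  have h := eq_trig (u := fun x => (a x : ℂ)) (by have := ha.1.continuous; fun_prop)
    (fun x => by simp only [ha.2 x]) (summable_fc (memHs_of_smooth ha 2)).1
  ext x
  rw [rt, ← congrFun h x, Complex.ofReal_re]

/-- A nonnegative even sequence vanishing at `0`, with bounded dyadic partial sums, is summable. -/
theorem summable_int_of_dyadic {g : ℤ → ℝ} (h0 : ∀ k, 0 ≤ g k) (hz : g 0 = 0)
    (he : ∀ k, g (-k) = g k) {Y : ℝ} (hY : ∀ J : ℕ, ∑ k ∈ Finset.Ico (1:ℕ) (2 ^ J), g (k:ℤ) ≤ Y) :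
    Summable g ∧ ∑' k, g k ≤ 2 * Y := by
  have hr : ∀ n : ℕ, ∑ k ∈ Finset.range n, g ((k:ℕ):ℤ) ≤ Y := by
    intro n
    refine le_trans ?_ (hY n)
    refine (Finset.sum_le_sum_of_subset_of_nonneg
      (Finset.range_mono (Nat.lt_two_pow_self (n := n)).le) fun _ _ _ => h0 _).trans ?_
    rw [Finset.range_eq_Ico, Finset.sum_eq_sum_Ico_succ_bot Nat.one_le_two_pow]
    simp [hz]
  have hs : Summable fun k : ℕ => g (k:ℤ) := summable_of_sum_range_le (fun _ => h0 _) hr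
  have ht : ∑' k : ℕ, g (k:ℤ) ≤ Y := Real.tsum_le_of_sum_range_le (fun _ => h0 _) hr
  have h2 := HasSum.of_nat_of_neg (f := g) hs.hasSum (by simpa only [he] using hs.hasSum)
  refine ⟨h2.summable, ?_⟩
  rw [h2.tsum_eq, hz]
  linarith

theorem sq_add_sq_le_add_sq {x y : ℝ} (hx : 0 ≤ x) (hy : 0 ≤ y) : y ^ 2 + x ^ 2 ≤ (x + y) ^ 2 := by
  nlinarith [mul_nonneg hx hy]

/-- The tame estimate for dS(a,b) on the Fourier side, in a form where the norms of order `2` which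
`seq_est` produces without a factor of `(a,b)` are absorbed by those of order `s - 1/2 ≥ 2`. -/
theorem cf_est (A : ℝ) (hA : 0 < A) {s : ℝ} (hs : (5:ℝ) / 2 ≤ s) : ∃ C : ℝ, 0 ≤ C ∧
    ∀ a b : ℝ → ℝ, smoothPer a → smoothPer b → pairNorm 3 a b ≤ min (1 / 8) (A / 2) / kEmb →
      ∀ α β : ℝ → ℝ, Continuous α → Function.Periodic α (2 * π) →
        memHsR (s - 1 / 2) α → Continuous β → Function.Periodic β (2 * π) →
        memHsR (s - 1 / 2) β → ∀ J : ℕ,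
        ∑ k ∈ Finset.Ico (1:ℕ) (2 ^ J), (k:ℝ) ^ (2 * s) * ‖cf A a b α β k‖ ^ 2
          ≤ C * (pairNorm (s - 1 / 2) α β + pairNorm (s + 1 / 2) a b * pairNorm 2 α β) ^ 2 := by
  obtain ⟨k0, k1, k2⟩ := bAsym_Kr
  obtain ⟨C0, hC0, e0⟩ := seq_est 0 k0 k1 hA (s := s) (by linarith)
  obtain ⟨C1, hC1, e1⟩ := seq_est 1 k1 k2 hA (s := s) (by linarith)
  refine ⟨2 * (C0 + C1) * (1 + kEmb ^ 2), by positivity, ?_⟩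
  intro a b ha hb hab α β hα pα mα hβ pβ mβ J
  set η₀ : ℝ := min (1 / 8) (A / 2) with hη
  have hke := kEmb_pos
  have sn : ∀ s u, 0 ≤ sobNormR s u := fun s u => sobNorm_nonneg s _
  have hab' : kEmb * (sobNormR 3 a + sobNormR 3 b) ≤ η₀ := by
    rw [mul_comm]; exact (le_div_iff₀ hke).1 hab
  have sa := smallC_of_smooth (η := η₀) ha (by nlinarith [sn 3 a, sn 3 b])
  have sb := smallC_of_smooth (η := η₀) hb (by nlinarith [sn 3 a, sn 3 b])
  have mα2 : memHs 2 (fun x => (α x : ℂ)) := memHs.mono (by linarith) mα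
  have mβ2 : memHs 2 (fun x => (β x : ℂ)) := memHs.mono (by linarith) mβ
  obtain ⟨fα, gα⟩ := summable_fc mα2
  obtain ⟨fβ, gβ⟩ := summable_fc mβ2
  have tα := eq_trig (u := fun x => (α x : ℂ)) (by fun_prop) (fun x => by simp only [pα x]) fα
  have tβ := eq_trig (u := fun x => (β x : ℂ)) (by fun_prop) (fun x => by simp only [pβ x]) fβ
  have eα := e1 η₀ _ _ _ sa sb (min_le_left _ _) (min_le_right _ _) fα
    (memHs_of_smooth ha _) (memHs_of_smooth hb _) mα J
  have eβ := e0 η₀ _ _ _ sa sb (min_le_left _ _) (min_le_right _ _) fβ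
    (memHs_of_smooth ha _) (memHs_of_smooth hb _) mβ J
  rw [← smooth_eq_rt ha, ← smooth_eq_rt hb, ← tα, ← sobNorm_sq, ← sobNorm_sq, ← sobNorm_sq] at eα
  rw [← smooth_eq_rt ha, ← smooth_eq_rt hb, ← tβ, ← sobNorm_sq, ← sobNorm_sq, ← sobNorm_sq] at eβ
  have hpt : ∀ k ∈ Finset.Ico (1:ℕ) (2 ^ J), (k:ℝ) ^ (2 * s) * ‖cf A a b α β k‖ ^ 2
      ≤ 2 * ((k:ℝ) ^ (2 * s) *
          ‖OI (Kr 1) (fun t => A + a t) (fun t => t + b t) (fun t => (α t : ℂ)) k‖ ^ 2)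
        + 2 * ((k:ℝ) ^ (2 * s) *
          ‖OI (Kr 0) (fun t => A + a t) (fun t => t + b t) (fun t => (β t : ℂ)) k‖ ^ 2) := by
    intro k _
    rw [cf_nat A ha.1.continuous hb.1.continuous hα hβ]
    generalize OI (Kr 1) _ _ _ k = x
    generalize OI (Kr 0) _ _ _ k = y
    have h1 : ‖x - Complex.I * y‖ ≤ ‖x‖ + ‖y‖ := by
      refine (norm_sub_le _ _).trans ?_
      rw [norm_mul, Complex.norm_I, one_mul]
    have h2 : ‖x - Complex.I * y‖ ^ 2 ≤ 2 * ‖x‖ ^ 2 + 2 * ‖y‖ ^ 2 := by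
      have : ‖x - Complex.I * y‖ ^ 2 ≤ (‖x‖ + ‖y‖) ^ 2 := by gcongr
      nlinarith [sq_nonneg (‖x‖ - ‖y‖)]
    calc _ ≤ (k:ℝ) ^ (2 * s) * (2 * ‖x‖ ^ 2 + 2 * ‖y‖ ^ 2) := by gcongr
      _ = _ := by ring
  refine (Finset.sum_le_sum hpt).trans ?_
  rw [Finset.sum_add_distrib, ← Finset.mul_sum, ← Finset.mul_sum]
  have moα : sobNormR 2 α ≤ sobNormR (s - 1 / 2) α := sobNorm_mono (by linarith) mα
  have moβ : sobNormR 2 β ≤ sobNormR (s - 1 / 2) β := sobNorm_mono (by linarith) mβ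
  have Mα : (∑' m, ‖fc (fun x => (α x : ℂ)) m‖) ^ 2 ≤ kEmb ^ 2 * sobNormR 2 α ^ 2 := by
    rw [← mul_pow]
    exact pow_le_pow_left₀ (tsum_nonneg fun _ => norm_nonneg _) gα 2
  have Mβ : (∑' m, ‖fc (fun x => (β x : ℂ)) m‖) ^ 2 ≤ kEmb ^ 2 * sobNormR 2 β ^ 2 := by
    rw [← mul_pow]
    exact pow_le_pow_left₀ (tsum_nonneg fun _ => norm_nonneg _) gβ 2
  have nn := sn 2 α
  have nn' := sn 2 β
  have n1 := sn (s + 1 / 2) a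
  have n2 := sn (s + 1 / 2) b
  have n3 := sn (s - 1 / 2) α
  have n4 := sn (s - 1 / 2) β
  unfold pairNorm
  change _ ≤ C1 * (sobNormR (s - 1 / 2) α ^ 2 + _ * (sobNormR (s + 1 / 2) a ^ 2
    + sobNormR (s + 1 / 2) b ^ 2 + 1)) at eα
  change _ ≤ C0 * (sobNormR (s - 1 / 2) β ^ 2 + _ * (sobNormR (s + 1 / 2) a ^ 2
    + sobNormR (s + 1 / 2) b ^ 2 + 1)) at eβ
  set Pα := sobNormR (s - 1 / 2) α
  set Pβ := sobNormR (s - 1 / 2) β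
  set Sα := sobNormR 2 α
  set Sβ := sobNormR 2 β
  set Ra := sobNormR (s + 1 / 2) a
  set Rb := sobNormR (s + 1 / 2) b
  have Z : ∀ P S M : ℝ, 0 ≤ S → S ≤ P → P ≤ Pα + Pβ → S ≤ Sα + Sβ → M ≤ kEmb ^ 2 * S ^ 2 →
      P ^ 2 + M * (Ra ^ 2 + Rb ^ 2 + 1)
        ≤ (1 + kEmb ^ 2) * (Pα + Pβ + (Ra + Rb) * (Sα + Sβ)) ^ 2 := by
    intro P S M hS hSP hP hSS hM
    have hR : Ra ^ 2 + Rb ^ 2 ≤ (Ra + Rb) ^ 2 := by nlinarith [mul_nonneg n1 n2]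
    have q1 : 0 ≤ (Ra + Rb) * (Sα + Sβ) := by positivity
    have hP0 : 0 ≤ P := hS.trans hSP
    calc P ^ 2 + M * (Ra ^ 2 + Rb ^ 2 + 1)
        ≤ P ^ 2 + (kEmb ^ 2 * S ^ 2) * ((Ra + Rb) ^ 2 + 1) := by gcongr
      _ = P ^ 2 + kEmb ^ 2 * (((Ra + Rb) * S) ^ 2 + S ^ 2) := by ring
      _ ≤ (Pα + Pβ) ^ 2 + kEmb ^ 2 * (((Ra + Rb) * (Sα + Sβ)) ^ 2 + (Pα + Pβ) ^ 2) := by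
          have := hSP.trans hP
          gcongr
      _ ≤ (Pα + Pβ + (Ra + Rb) * (Sα + Sβ)) ^ 2
          + kEmb ^ 2 * (Pα + Pβ + (Ra + Rb) * (Sα + Sβ)) ^ 2 := by
          have q2 : 0 ≤ Pα + Pβ := by positivity
          exact add_le_add (pow_le_pow_left₀ q2 (le_add_of_nonneg_right q1) 2)
            (mul_le_mul_of_nonneg_left (sq_add_sq_le_add_sq q2 q1) (sq_nonneg _))
      _ = _ := by ring
  have z1 := Z Pα Sα _ nn moα (by linarith) (by linarith) Mα
  have z2 := Z Pβ Sβ _ nn' moβ (by linarith) (by linarith) Mβ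
  have w1 := eα.trans (mul_le_mul_of_nonneg_left z1 hC1)
  have w2 := eβ.trans (mul_le_mul_of_nonneg_left z2 hC0)
  linarith

/-- tame estimates for dS(a,b). -/
theorem statement14 (Astar : ℝ) (hAstar : 0 < Astar) :
    ∃ δ : ℝ, 0 < δ ∧ ∀ s : ℝ, (5 : ℝ) / 2 ≤ s → ∃ C : ℝ, 0 < C ∧
      ∀ a b : ℝ → ℝ, smoothPer a → smoothPer b → pairNorm 3 a b < δ →
        ∀ α β : ℝ → ℝ, Continuous α → Function.Periodic α (2 * π) →
          memHsR (s - 1 / 2) α → Continuous β → Function.Periodic β (2 * π) →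
          memHsR (s - 1 / 2) β →
          sobNorm s (dS Astar a b α β) ≤
            C * pairNorm (s - 1 / 2) α β + C * pairNorm (s + 1 / 2) a b * pairNorm 2 α β := by
  have hke := kEmb_pos
  refine ⟨min (1 / 8) (Astar / 2) / kEmb, by positivity, fun s hs => ?_⟩
  obtain ⟨C, hC, hest⟩ := cf_est Astar hAstar hs
  refine ⟨Real.sqrt (2 * C) + 1, by positivity, ?_⟩
  intro a b ha hb hab α β hα pα mα hβ pβ mβ
  set X := pairNorm (s - 1 / 2) α β + pairNorm (s + 1 / 2) a b * pairNorm 2 α β with hX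
  have pn : ∀ s u v, 0 ≤ pairNorm s u v := fun s u v =>
    add_nonneg (sobNorm_nonneg s _) (sobNorm_nonneg s _)
  have hX0 : 0 ≤ X := add_nonneg (pn _ _ _) (mul_nonneg (pn _ _ _) (pn _ _ _))
  set c : ℤ → ℂ := fun k => if k = 0 then 0 else cf Astar a b α β k with hc
  have hdS : dS Astar a b α β = trig c := by
    ext x
    unfold dS trig
    refine tsum_congr fun k => ?_
    simp only [hc]
    split_ifs
    · simp
    · rfl
  have hsum := summable_int_of_dyadic (g := fun k => jb k ^ (2 * s) * ‖c k‖ ^ 2) (Y := C * X ^ 2)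
    (fun k => mul_nonneg (Real.rpow_nonneg (jb_pos k).le _) (sq_nonneg _)) (by simp [hc])
    (fun k => by
      have h1 : jb (-k) = jb k := by simp [jb]
      have h2 : ‖c (-k)‖ = ‖c k‖ := by
        simp only [hc, neg_eq_zero]
        split_ifs
        · rfl
        · rw [cf_neg, RCLike.norm_conj]
      simp only [h1, h2])
    (fun J => by
      refine le_trans (le_of_eq ?_) (hest a b ha hb hab.le α β hα pα mα hβ pβ mβ J)
      refine Finset.sum_congr rfl fun k hk => ?_
      have hk1 : (k:ℤ) ≠ 0 := by
        have := (Finset.mem_Ico.1 hk).1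
        omega
      simp only [hc, if_neg hk1, jb_eq hk1]
      simp)
  obtain ⟨hs1, hs2⟩ := hsum
  have hcs : Summable fun k => ‖c k‖ := by
    refine Summable.of_nonneg_of_le (fun _ => norm_nonneg _) (fun k => ?_)
      (summable_jb_neg_two.add hs1)
    have hj := jb_pos k
    have h1 : jb k ^ 2 ≤ jb k ^ (2 * s) := by
      rw [← Real.rpow_two]
      exact Real.rpow_le_rpow_of_exponent_le (one_le_jb k) (by linarith)
    have h2 : ‖c k‖ = (jb k)⁻¹ * (jb k * ‖c k‖) := by field_simp
    have h3 : (jb k ^ 2)⁻¹ = (jb k)⁻¹ ^ 2 := by rw [inv_pow]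
    have h4 := mul_le_mul_of_nonneg_right h1 (sq_nonneg ‖c k‖)
    have h5 : (jb k * ‖c k‖) ^ 2 = jb k ^ 2 * ‖c k‖ ^ 2 := mul_pow _ _ _
    have h6 : 0 ≤ (jb k)⁻¹ * (jb k * ‖c k‖) := by positivity
    nlinarith [sq_nonneg ((jb k)⁻¹ - jb k * ‖c k‖)]
  have hfin : sobNorm s (dS Astar a b α β) ≤ Real.sqrt (2 * C) * X := by
    rw [hdS, sobNorm]
    simp_rw [fc_trig hcs]
    calc Real.sqrt (∑' k, jb k ^ (2 * s) * ‖c k‖ ^ 2) ≤ Real.sqrt (2 * C * X ^ 2) :=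
          Real.sqrt_le_sqrt (by linarith)
      _ = Real.sqrt (2 * C) * X := by
          rw [Real.sqrt_mul (by positivity), Real.sqrt_sq hX0]
  calc _ ≤ Real.sqrt (2 * C) * X := hfin
    _ ≤ (Real.sqrt (2 * C) + 1) * X := by gcongr; linarith
    _ = _ := by rw [hX]; ring
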